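/- arXiv:1405.4410 — 2 statements merged into one kernel-verified Lean document; each statement's English description precedes it below -/
import Mathlib

section
/- (Maximum principle.) Let ω ⊂ ℝⁿ be a nonempty bounded open set and let v : cl(ω) → [0,∞) be a continuous function which is C¹ on ω, satisfies ∫_ω |Dv(x)|^p dx < ∞, and is a solution of div A(x,Dv) + b(x)|Dv|^α ≥ 0 in ω. Then max_{x∈cl(ω)} v(x) = max_{x∈∂ω} v(x). -/
open MeasureTheory Metric Set Filter
open scoped RealInnerProductSpace ENNReal

noncomputable section

abbrev Euc (n : ℕ) := EuclideanSpace ℝ (Fin n)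

/-- Weak solution of `div A(x,Dv) + b(x)|Dv|^α ≥ a(x)` on an open set `U`:
for every nonnegative test function `φ ∈ C₀^∞(U)`,
`-∫ A(x,Dv)·Dφ + ∫ b |Dv|^α φ ≥ ∫ a φ`. -/
def IsWeakSol {n : ℕ} (A : Euc n → Euc n → Euc n) (b : Euc n → ℝ) (α : ℝ)
    (a : Euc n → ℝ) (U : Set (Euc n)) (v : Euc n → ℝ) : Prop :=
  ∀ φ : Euc n → ℝ, ContDiff ℝ (⊤ : ℕ∞) φ → HasCompactSupport φ → tsupport φ ⊆ U →
    (∀ x, 0 ≤ φ x) →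
    (∫ x in U, a x * φ x) ≤
      (-(∫ x in U, ⟪A x (gradient v x), gradient φ x⟫)) +
        ∫ x in U, b x * ‖gradient v x‖ ^ α * φ x

/-- Structural conditions on `A`: measurability, coercivity and growth. -/
def StructCond {n : ℕ} (A : Euc n → Euc n → Euc n) (p C₁ C₂ : ℝ) : Prop :=
  Measurable (Function.uncurry A) ∧
    ∀ x ζ : Euc n, C₁ * ‖ζ‖ ^ p ≤ ⟪ζ, A x ζ⟫ ∧ ‖A x ζ‖ ≤ C₂ * ‖ζ‖ ^ (p - 1)

/-- Locally bounded function on `ℝⁿ`. -/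
def LocBdd {n : ℕ} (b : Euc n → ℝ) : Prop :=
  ∀ K : Set (Euc n), IsCompact K → ∃ C, ∀ x ∈ K, b x ≤ C

/-- `M(r; u) = max_{|x| = r} u x`. -/
def sphMax {n : ℕ} (u : Euc n → ℝ) (r : ℝ) : ℝ := sSup (u '' Metric.sphere (0 : Euc n) r)

/-- `g_θ(t) = inf_{s ∈ (t/θ, θ t)} g s`. -/
def ginf (g : ℝ → ℝ) (θ t : ℝ) : ℝ := sInf (g '' Set.Ioo (t / θ) (θ * t))

/-- The open annulus `{x : r₁ < |x| < r₂}`. -/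
def Ann (n : ℕ) (r₁ r₂ : ℝ) : Set (Euc n) := {x : Euc n | r₁ < ‖x‖ ∧ ‖x‖ < r₂}

/-- `q_σ(r) = ess inf_{r/σ < |x| < σ r} q x`. -/
def qinf {n : ℕ} (q : Euc n → ℝ) (σ r : ℝ) : ℝ :=
  essInf q (volume.restrict (Ann n (r / σ) (σ * r)))

/-- `f_σ(r) = q_σ(r) / (1 + r q_σ(r)^{(α-p+1)/α} ess sup_{r/σ<|x|<σr} b^{(p-1)/α})`. -/
def fdef {n : ℕ} (q b : Euc n → ℝ) (p α σ r : ℝ) : ℝ :=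
  qinf q σ r /
    (1 + r * qinf q σ r ^ ((α - p + 1) / α) *
      essSup (fun x => b x ^ ((p - 1) / α)) (volume.restrict (Ann n (r / σ) (σ * r))))

/-! Suppose that `M = max v` over `closure ω` exceeds the maximum over `frontier ω`, and let `k < M`
be a level above the latter, `w = (v - k)₊`. Testing the inequality with `w ^ 2`, and bounding
`b |Dv| ^ α` by `B |Dv| ^ (p - 1)` on the compact set `{v ≥ k} ⊆ ω`, gives
`2 C₁ ∫ w |Dv| ^ p ≤ B ∫ w ^ 2 |Dv| ^ (p - 1)`, from which Young's inequality extracts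
`∫ w ^ p |Dv| ≤ C ∫_S w ^ (p + 1)` with `S = {v > k, Dv ≠ 0}`. The left-hand side is
`∫ |D(w ^ (p + 1))| / (p + 1)`, so the Sobolev inequality for `W^{1,1}` and Hölder's inequality
bound the right-hand side by a constant multiple of `|S| ^ (1 / n)` times the left-hand side.
The constant does not depend on `k`, while `|S| → 0` as `k ↑ M` because `Dv = 0` wherever `v = M`;
hence `w = 0` for `k` close to `M`, contradicting `max v = M`. -/

open scoped Topology Convolution

section RealVariable

theorem hasDerivAt_posPart_rpow {r : ℝ} (hr : 1 < r) (t : ℝ) :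
    HasDerivAt (fun t : ℝ ↦ t⁺ ^ r) (r * t⁺ ^ (r - 1)) t := by
  have off_zero : ∀ s ≠ 0, HasDerivAt (fun t : ℝ ↦ t⁺ ^ r) (r * s⁺ ^ (r - 1)) s := by
    intro s hs
    rcases hs.lt_or_gt with hneg | hpos
    · rw [posPart_eq_zero.2 hneg.le, Real.zero_rpow (by linarith), mul_zero]
      refine (hasDerivAt_const s (0 : ℝ)).congr_of_eventuallyEq ?_
      filter_upwards [eventually_lt_nhds hneg] with t ht
      rw [posPart_eq_zero.2 ht.le, Real.zero_rpow (by linarith)]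
    · rw [posPart_eq_self.2 hpos.le]
      refine (Real.hasDerivAt_rpow_const (.inl hs)).congr_of_eventuallyEq ?_
      filter_upwards [eventually_gt_nhds hpos] with t ht
      rw [posPart_eq_self.2 ht.le]
  have continuous_rpow {q : ℝ} (hq : 0 ≤ q) : Continuous fun t : ℝ ↦ t⁺ ^ q :=
    continuous_posPart.rpow_const fun _ ↦ .inr hq
  exact hasDerivAt_of_hasDerivAt_of_ne' off_zero (continuous_rpow (by linarith)).continuousAt
    ((continuous_rpow (by linarith)).const_mul r).continuousAt t

theorem contDiff_posPart_rpow {r : ℝ} (hr : 1 < r) : ContDiff ℝ 1 fun t : ℝ ↦ t⁺ ^ r := by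
  have hderiv : deriv (fun t : ℝ ↦ t⁺ ^ r) = fun t ↦ r * t⁺ ^ (r - 1) :=
    funext fun t ↦ (hasDerivAt_posPart_rpow hr t).deriv
  refine contDiff_one_iff_deriv.2 ⟨fun t ↦ (hasDerivAt_posPart_rpow hr t).differentiableAt, ?_⟩
  rw [hderiv]
  exact (continuous_posPart.rpow_const fun _ ↦ .inr (by linarith)).const_mul r

theorem exists_add_mul_rpow_sub_one_le {p a : ℝ} (hp : 1 < p) (ha : 0 < a) (B : ℝ) :
    ∃ C, ∀ t, 0 ≤ t → t + B * t ^ (p - 1) ≤ a * t ^ p + C := by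
  have hsmall : Tendsto (fun t : ℝ ↦ t ^ (-(p - 1)) + B * t ^ (-1 : ℝ)) atTop (𝓝 0) := by
    simpa using (tendsto_rpow_neg_atTop (y := p - 1) (by linarith)).add
      ((tendsto_rpow_neg_atTop one_pos).const_mul B)
  obtain ⟨T, hT⟩ := eventually_atTop.1 ((hsmall.eventually_le_const ha).and (eventually_gt_atTop 0))
  have hcont : Continuous fun t : ℝ ↦ t + B * t ^ (p - 1) - a * t ^ p := by
    have := Real.continuous_rpow_const (q := p) (by linarith)
    have := Real.continuous_rpow_const (q := p - 1) (by linarith)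
    fun_prop
  obtain ⟨C, hC⟩ := (isCompact_Icc (a := 0) (b := T)).bddAbove_image hcont.continuousOn
  refine ⟨max C 0, fun t ht ↦ ?_⟩
  rcases le_total t T with htT | hTt
  · linarith [hC (mem_image_of_mem _ ⟨ht, htT⟩), le_max_left C 0]
  · obtain ⟨hle, hpos⟩ := hT t hTt
    have hfactor : t + B * t ^ (p - 1) = (t ^ (-(p - 1)) + B * t ^ (-1 : ℝ)) * t ^ p := by
      rw [add_mul, mul_assoc, ← Real.rpow_add hpos, ← Real.rpow_add hpos]
      rw [show -(p - 1) + p = 1 by ring, show -1 + p = p - 1 by ring, Real.rpow_one]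
    rw [hfactor]
    linarith [mul_le_mul_of_nonneg_right hle (Real.rpow_nonneg ht p), le_max_right C 0]

theorem exists_rpow_mul_add_le {p a : ℝ} (hp : 1 < p) (ha : 0 < a) (B : ℝ) :
    ∃ C, ∀ t w, 0 ≤ t → 0 < w →
      w ^ p * t + B * t ^ (p - 1) * w ^ 2 ≤ a * w * t ^ p + C * w ^ (p + 1) := by
  obtain ⟨C, hC⟩ := exists_add_mul_rpow_sub_one_le hp ha B
  refine ⟨C, fun t w ht hw ↦ ?_⟩
  have hscaled := mul_le_mul_of_nonneg_right (hC (t / w) (by positivity))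
    (Real.rpow_nonneg hw.le (p + 1))
  rw [Real.div_rpow ht hw.le, Real.div_rpow ht hw.le, Real.rpow_sub_one hw.ne',
    Real.rpow_add_one hw.ne'] at hscaled
  rw [Real.rpow_add_one hw.ne']
  calc w ^ p * t + B * t ^ (p - 1) * w ^ 2
      = (t / w + B * (t ^ (p - 1) / (w ^ p / w))) * (w ^ p * w) := by field_simp
    _ ≤ (a * (t ^ p / w ^ p) + C) * (w ^ p * w) := hscaled
    _ = a * w * t ^ p + C * (w ^ p * w) := by field_simp

end RealVariable

section Mollification

variable {E : Type*} [NormedAddCommGroup E] [NormedSpace ℝ E] [FiniteDimensional ℝ E]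

theorem tsupport_normed_convolution_subset [MeasurableSpace E] [BorelSpace E] (μ : Measure E)
    [μ.IsAddHaarMeasure] (ρ : ContDiffBump (0 : E)) (φ : E → ℝ) :
    tsupport (ρ.normed μ ⋆[ContinuousLinearMap.lsmul ℝ ℝ, μ] φ) ⊆
      cthickening ρ.rOut (tsupport φ) := by
  refine closure_minimal ?_ isClosed_cthickening
  intro x hx
  obtain ⟨y, hy, z, hz, rfl⟩ := support_convolution_subset (ContinuousLinearMap.lsmul ℝ ℝ) hx
  rw [ρ.support_normed_eq, mem_ball_zero_iff] at hy
  exact mem_cthickening_of_dist_le (y + z) z ρ.rOut _ (subset_tsupport φ hz) (by simpa using hy.le)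

theorem exists_contDiff_top_nonneg_approx {φ : E → ℝ} (hφ : ContDiff ℝ 1 φ)
    (hφc : HasCompactSupport φ) (hφ0 : ∀ x, 0 ≤ φ x) {δ ε : ℝ} (hδ : 0 < δ) (hε : 0 < ε) :
    ∃ ψ : E → ℝ, ContDiff ℝ (⊤ : ℕ∞) ψ ∧ tsupport ψ ⊆ cthickening δ (tsupport φ) ∧
      (∀ x, 0 ≤ ψ x) ∧ (∀ x, |ψ x - φ x| ≤ ε) ∧ ∀ x, ‖fderiv ℝ ψ x - fderiv ℝ φ x‖ ≤ ε := by
  borelize E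
  let μ : Measure E := Measure.addHaar
  have hφ_cont := hφ.continuous
  have hDφ_cont : Continuous (fderiv ℝ φ) := hφ.continuous_fderiv one_ne_zero
  obtain ⟨η₁, hη₁, near_φ⟩ :=
    uniformContinuous_iff.1 (hφc.uniformContinuous_of_continuous hφ_cont) ε hε
  obtain ⟨η₂, hη₂, near_Dφ⟩ :=
    uniformContinuous_iff.1 ((hφc.fderiv ℝ).uniformContinuous_of_continuous hDφ_cont) ε hε
  have hη : 0 < min δ (min η₁ η₂) := lt_min hδ (lt_min hη₁ hη₂)
  let ρ : ContDiffBump (0 : E) := ⟨_, _, half_pos hη, half_lt_self hη⟩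
  have fderiv_convolution : ∀ x, fderiv ℝ (ρ.normed μ ⋆[ContinuousLinearMap.lsmul ℝ ℝ, μ] φ) x =
      (ρ.normed μ ⋆[ContinuousLinearMap.lsmul ℝ ℝ, μ] fderiv ℝ φ) x := fun x ↦
    (hφc.hasFDerivAt_convolution_right (ContinuousLinearMap.lsmul ℝ ℝ)
      ρ.continuous_normed.locallyIntegrable hφ x).fderiv
  refine ⟨ρ.normed μ ⋆[ContinuousLinearMap.lsmul ℝ ℝ, μ] φ,
    ρ.hasCompactSupport_normed.contDiff_convolution_left _ ρ.contDiff_normed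
      hφ_cont.locallyIntegrable,
    (tsupport_normed_convolution_subset μ ρ φ).trans (cthickening_mono (min_le_left _ _) _),
    fun x ↦ integral_nonneg fun y ↦ mul_nonneg (ρ.nonneg_normed y) (hφ0 _), fun x ↦ ?_, fun x ↦ ?_⟩
  · rw [← Real.dist_eq]
    refine ρ.dist_normed_convolution_le hφ_cont.aestronglyMeasurable fun y hy ↦ (near_φ ?_).le
    exact (mem_ball.1 hy).trans_le ((min_le_right _ _).trans (min_le_left _ _))
  · rw [fderiv_convolution, ← dist_eq_norm]
    refine ρ.dist_normed_convolution_le hDφ_cont.aestronglyMeasurable fun y hy ↦ (near_Dφ ?_).le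
    exact (mem_ball.1 hy).trans_le ((min_le_right _ _).trans (min_le_right _ _))

end Mollification

section TestFunctions

section Integrability

variable {X G₁ G₂ G₃ : Type*} [TopologicalSpace X] [MeasurableSpace X] [OpensMeasurableSpace X]
  {μ : Measure X} {ω : Set X} [NormedAddCommGroup G₁] [NormedSpace ℝ G₁] [NormedAddCommGroup G₂]
  [NormedSpace ℝ G₂] [NormedAddCommGroup G₃] [NormedSpace ℝ G₃]

theorem integrable_bilin_of_hasCompactSupport (B : G₁ →L[ℝ] G₂ →L[ℝ] G₃) {g : X → G₁} {f : X → G₂}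
    (hf : LocallyIntegrableOn f ω μ) (hg : Continuous g) (hgc : HasCompactSupport g)
    (hgω : tsupport g ⊆ ω) : Integrable (fun x ↦ B (g x) (f x)) μ := by
  obtain ⟨C, hC⟩ := hgc.exists_bound_of_continuous hg
  have hsupp : Function.support (fun x ↦ B (g x) (f x)) ⊆ tsupport g := fun x hx ↦
    subset_tsupport g fun hgx ↦ hx (by simp only [hgx, map_zero, zero_apply])
  exact (integrableOn_iff_integrable_of_support_subset hsupp).1 <|
    B.integrable_of_bilin_of_bdd_left C
      (hg.stronglyMeasurable_of_hasCompactSupport hgc).aestronglyMeasurable (ae_of_all _ hC)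
      (hf.integrableOn_compact_subset hgω hgc)

theorem integrable_mul_of_hasCompactSupport {h φ : X → ℝ} (hh : LocallyIntegrableOn h ω μ)
    (hφ : Continuous φ) (hφc : HasCompactSupport φ) (hφω : tsupport φ ⊆ ω) :
    Integrable (fun x ↦ h x * φ x) μ := by
  simpa only [ContinuousLinearMap.mul_apply', mul_comm] using
    integrable_bilin_of_hasCompactSupport (.mul ℝ ℝ) hh hφ hφc hφω

end Integrability

variable {E : Type*} [NormedAddCommGroup E] [NormedSpace ℝ E] {ω K : Set E} {F : E → E}
  {h φ ψ : E → ℝ} {ε : ℝ}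

theorem fderiv_apply_sub_mul_le (hφK : tsupport φ ⊆ K) (hψK : tsupport ψ ⊆ K) {x : E}
    (hψφ : |ψ x - φ x| ≤ ε) (hDψφ : ‖fderiv ℝ ψ x - fderiv ℝ φ x‖ ≤ ε) :
    fderiv ℝ φ x (F x) - h x * φ x ≤
      fderiv ℝ ψ x (F x) - h x * ψ x + ε * K.indicator (fun x ↦ ‖F x‖ + ‖h x‖) x := by
  by_cases hxK : x ∈ K
  · have hD : |fderiv ℝ ψ x (F x) - fderiv ℝ φ x (F x)| ≤ ε * ‖F x‖ :=
      (fderiv ℝ ψ x - fderiv ℝ φ x).le_of_opNorm_le hDψφ (F x)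
    have hmul : |h x * (ψ x - φ x)| ≤ ‖h x‖ * ε := by
      rw [abs_mul, ← Real.norm_eq_abs (h x)]
      gcongr
    rw [indicator_of_mem hxK]
    linarith [neg_abs_le (fderiv ℝ ψ x (F x) - fderiv ℝ φ x (F x)), le_abs_self (h x * (ψ x - φ x))]
  · have hφx := notMem_subset hφK hxK
    have hψx := notMem_subset hψK hxK
    simp [fderiv_of_notMem_tsupport, image_eq_zero_of_notMem_tsupport, hφx, hψx, hxK]

variable [MeasurableSpace E] [BorelSpace E] {μ : Measure E}

/-- The weak form of `div F + h ≥ 0` on `ω`: the inequality holds against every smooth nonnegative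
test function with compact support in `ω`. -/
def IsWeakDivNonneg (μ : Measure E) (F : E → E) (h : E → ℝ) (ω : Set E) : Prop :=
  ∀ φ : E → ℝ, ContDiff ℝ (⊤ : ℕ∞) φ → HasCompactSupport φ → tsupport φ ⊆ ω → (∀ x, 0 ≤ φ x) →
    ∫ x in ω, (fderiv ℝ φ x (F x) - h x * φ x) ∂μ ≤ 0

theorem integrable_fderiv_apply (hF : LocallyIntegrableOn F ω μ) (hφ : ContDiff ℝ 1 φ)
    (hφc : HasCompactSupport φ) (hφω : tsupport φ ⊆ ω) :
    Integrable (fun x ↦ fderiv ℝ φ x (F x)) μ :=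
  integrable_bilin_of_hasCompactSupport (.id ℝ (E →L[ℝ] ℝ)) hF (hφ.continuous_fderiv one_ne_zero)
    (hφc.fderiv ℝ) ((tsupport_fderiv_subset ℝ).trans hφω)

theorem integrable_fderiv_apply_sub_mul (hF : LocallyIntegrableOn F ω μ)
    (hh : LocallyIntegrableOn h ω μ) (hφ : ContDiff ℝ 1 φ) (hφc : HasCompactSupport φ)
    (hφω : tsupport φ ⊆ ω) : Integrable (fun x ↦ fderiv ℝ φ x (F x) - h x * φ x) μ :=
  (integrable_fderiv_apply hF hφ hφc hφω).sub
    (integrable_mul_of_hasCompactSupport hh hφ.continuous hφc hφω)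

theorem integral_fderiv_apply_sub_mul_le (hF : LocallyIntegrableOn F ω μ)
    (hh : LocallyIntegrableOn h ω μ) (hK : IsCompact K) (hKω : K ⊆ ω) (hφ : ContDiff ℝ 1 φ)
    (hφK : tsupport φ ⊆ K) (hψ : ContDiff ℝ 1 ψ) (hψK : tsupport ψ ⊆ K)
    (hψφ : ∀ x, |ψ x - φ x| ≤ ε) (hDψφ : ∀ x, ‖fderiv ℝ ψ x - fderiv ℝ φ x‖ ≤ ε) :
    ∫ x in ω, (fderiv ℝ φ x (F x) - h x * φ x) ∂μ ≤
      (∫ x in ω, (fderiv ℝ ψ x (F x) - h x * ψ x) ∂μ) +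
        ε * ∫ x in ω, K.indicator (fun x ↦ ‖F x‖ + ‖h x‖) x ∂μ := by
  have hφ_int : Integrable (fun x ↦ fderiv ℝ φ x (F x) - h x * φ x) μ :=
    integrable_fderiv_apply_sub_mul hF hh hφ (hK.of_isClosed_subset (isClosed_tsupport φ) hφK)
      (hφK.trans hKω)
  have hψ_int : Integrable (fun x ↦ fderiv ℝ ψ x (F x) - h x * ψ x) μ :=
    integrable_fderiv_apply_sub_mul hF hh hψ (hK.of_isClosed_subset (isClosed_tsupport ψ) hψK)
      (hψK.trans hKω)
  have herr : Integrable (fun x ↦ ε * K.indicator (fun x ↦ ‖F x‖ + ‖h x‖) x) μ := by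
    refine ((integrable_indicator_iff hK.measurableSet).2 ?_).const_mul ε
    exact (hF.integrableOn_compact_subset hKω hK).norm.add
      (hh.integrableOn_compact_subset hKω hK).norm
  rw [← integral_const_mul, ← integral_add hψ_int.integrableOn herr.integrableOn]
  exact integral_mono hφ_int.integrableOn (hψ_int.add herr).integrableOn
    fun x ↦ fderiv_apply_sub_mul_le hφK hψK (hψφ x) (hDψφ x)

theorem IsWeakDivNonneg.integral_nonpos_of_contDiff_one [FiniteDimensional ℝ E]
    (hdiv : IsWeakDivNonneg μ F h ω) (hω : IsOpen ω) (hF : LocallyIntegrableOn F ω μ)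
    (hh : LocallyIntegrableOn h ω μ) (hφ : ContDiff ℝ 1 φ) (hφc : HasCompactSupport φ)
    (hφω : tsupport φ ⊆ ω) (hφ0 : ∀ x, 0 ≤ φ x) :
    ∫ x in ω, (fderiv ℝ φ x (F x) - h x * φ x) ∂μ ≤ 0 := by
  obtain ⟨δ, hδ, hKω⟩ := hφc.isCompact.exists_cthickening_subset_open hω hφω
  set K := cthickening δ (tsupport φ)
  have hK : IsCompact K := hφc.isCompact.cthickening
  set m := ∫ x in ω, K.indicator (fun x ↦ ‖F x‖ + ‖h x‖) x ∂μ
  have approx : ∀ ε > 0, ∫ x in ω, (fderiv ℝ φ x (F x) - h x * φ x) ∂μ ≤ ε * m := by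
    intro ε hε
    obtain ⟨ψ, hψ, hψK, hψ0, hψφ, hDψφ⟩ := exists_contDiff_top_nonneg_approx hφ hφc hφ0 hδ hε
    have hψ1 : ContDiff ℝ 1 ψ := hψ.of_le (by exact_mod_cast le_top)
    have htest := hdiv ψ hψ (hK.of_isClosed_subset (isClosed_tsupport ψ) hψK) (hψK.trans hKω) hψ0
    linarith [integral_fderiv_apply_sub_mul_le hF hh hK hKω hφ (self_subset_cthickening _)
      hψ1 hψK hψφ hDψφ]
  have lim : Tendsto (fun ε ↦ ε * m) (𝓝[>] 0) (𝓝 0) :=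
    ((continuous_mul_const m).tendsto' 0 0 (zero_mul m)).mono_left nhdsWithin_le_nhds
  exact ge_of_tendsto lim (eventually_mem_nhdsWithin.mono approx)

end TestFunctions

section Sobolev

open Module (finrank)

variable {E G : Type*} [NormedAddCommGroup E] [NormedSpace ℝ E] [FiniteDimensional ℝ E]
  [MeasurableSpace E] [BorelSpace E] (μ : Measure E) [μ.IsAddHaarMeasure]
  [NormedAddCommGroup G] [NormedSpace ℝ G]

theorem eLpNorm_restrict_le_eLpNorm_fderiv (hE : 2 ≤ finrank ℝ E) (s : Set E) {u : E → G}
    (hu : ContDiff ℝ 1 u) (huc : HasCompactSupport u) :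
    eLpNorm u 1 (μ.restrict s) ≤
      eLpNormLESNormFDerivOneConst μ (NNReal.conjExponent (finrank ℝ E)) *
        eLpNorm (fderiv ℝ u) 1 μ * μ s ^ (1 / finrank ℝ E : ℝ) := by
  set q := NNReal.conjExponent (finrank ℝ E)
  have hconj : NNReal.HolderConjugate (finrank ℝ E) q :=
    .conjExponent (by exact_mod_cast hE)
  have hexp : 1 / (1 : ℝ≥0∞).toReal - 1 / (q : ℝ≥0∞).toReal = 1 / finrank ℝ E := by
    have := hconj.coe.inv_add_inv_eq_one
    simp only [ENNReal.toReal_one, ENNReal.coe_toReal, NNReal.coe_natCast] at this ⊢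
    simp only [one_div, inv_one]
    linarith
  calc eLpNorm u 1 (μ.restrict s)
      ≤ eLpNorm u q (μ.restrict s) * μ s ^ (1 / finrank ℝ E : ℝ) := by
        simpa only [hexp, Measure.restrict_apply_univ] using
          eLpNorm_le_eLpNorm_mul_rpow_measure_univ (μ := μ.restrict s)
            (ENNReal.one_le_coe_iff.2 hconj.symm.lt.le) hu.continuous.aestronglyMeasurable
    _ ≤ eLpNorm u q μ * μ s ^ (1 / finrank ℝ E : ℝ) := by
        gcongr
        exact Measure.restrict_le_self
    _ ≤ _ := by
        gcongr
        exact eLpNorm_le_eLpNorm_fderiv_one μ hu huc hconj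

theorem exists_setIntegral_norm_le_integral_norm_fderiv (hE : 2 ≤ finrank ℝ E) :
    ∃ C, ∀ u : E → G, ContDiff ℝ 1 u → HasCompactSupport u → ∀ s, μ s ≠ ∞ →
      ∫ x in s, ‖u x‖ ∂μ ≤ C * μ.real s ^ (1 / finrank ℝ E : ℝ) * ∫ x, ‖fderiv ℝ u x‖ ∂μ := by
  refine ⟨eLpNormLESNormFDerivOneConst μ (NNReal.conjExponent (finrank ℝ E)),
    fun u hu huc s hs ↦ ?_⟩
  have hu_int : Integrable u μ := hu.continuous.integrable_of_hasCompactSupport huc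
  have hDu_int : Integrable (fderiv ℝ u) μ :=
    (hu.continuous_fderiv one_ne_zero).integrable_of_hasCompactSupport (huc.fderiv ℝ)
  have hsob := ENNReal.toReal_mono ?_ (eLpNorm_restrict_le_eLpNorm_fderiv μ hE s hu huc)
  · rw [ENNReal.toReal_mul, ENNReal.toReal_mul, ← ENNReal.toReal_rpow, mul_right_comm] at hsob
    simpa [measureReal_def, eLpNorm_one_eq_lintegral_enorm, ← integral_norm_eq_lintegral_enorm,
      hu_int.integrableOn.aestronglyMeasurable, hDu_int.aestronglyMeasurable] using hsob
  · have hDu : eLpNorm (fderiv ℝ u) 1 μ ≠ ∞ := (memLp_one_iff_integrable.2 hDu_int).eLpNorm_ne_top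
    finiteness

theorem exists_pos_eq_zero_of_integral_fderiv_le (hE : 2 ≤ finrank ℝ E) (c : ℝ) :
    ∃ δ > 0, ∀ u : E → G, ContDiff ℝ 1 u → HasCompactSupport u → ∀ s, μ s ≠ ∞ → μ.real s < δ →
      ∫ x, ‖fderiv ℝ u x‖ ∂μ ≤ c * ∫ x in s, ‖u x‖ ∂μ → u = 0 := by
  obtain ⟨C, sobolev⟩ := exists_setIntegral_norm_le_integral_norm_fderiv (G := G) μ hE
  have hθ : (0 : ℝ) < 1 / finrank ℝ E := by positivity
  have lim : Tendsto (fun m : ℝ ↦ |c| * (C * m ^ (1 / finrank ℝ E : ℝ))) (𝓝 0) (𝓝 0) := by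
    have := Real.continuous_rpow_const hθ.le
    exact Continuous.tendsto' (by fun_prop) 0 0 (by rw [Real.zero_rpow hθ.ne', mul_zero, mul_zero])
  obtain ⟨δ, hδ, small⟩ := Metric.eventually_nhds_iff.1 (lim.eventually_lt_const one_pos)
  refine ⟨δ, hδ, fun u hu huc s hs hsδ hDu ↦ ?_⟩
  have hfactor : |c| * (C * μ.real s ^ (1 / finrank ℝ E : ℝ)) < 1 :=
    small (by simpa [Real.dist_eq, abs_of_nonneg measureReal_nonneg] using hsδ)
  have hD_le : ∫ x, ‖fderiv ℝ u x‖ ∂μ ≤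
      |c| * (C * μ.real s ^ (1 / finrank ℝ E : ℝ)) * ∫ x, ‖fderiv ℝ u x‖ ∂μ :=
    calc ∫ x, ‖fderiv ℝ u x‖ ∂μ ≤ c * ∫ x in s, ‖u x‖ ∂μ := hDu
      _ ≤ |c| * (C * μ.real s ^ (1 / finrank ℝ E : ℝ) * ∫ x, ‖fderiv ℝ u x‖ ∂μ) :=
        mul_le_mul (le_abs_self c) (sobolev u hu huc s hs)
          (integral_nonneg fun _ ↦ norm_nonneg _) (abs_nonneg c)
      _ = _ := (mul_assoc _ _ _).symm
  have hD_nonneg : 0 ≤ ∫ x, ‖fderiv ℝ u x‖ ∂μ := integral_nonneg fun _ ↦ norm_nonneg _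
  have hD : ∫ x, ‖fderiv ℝ u x‖ ∂μ = 0 := by nlinarith
  have hu_int : ∫ x, ‖u x‖ ∂μ ≤ 0 := by
    have := sobolev u hu huc (tsupport u) huc.isCompact.measure_ne_top
    rwa [hD, mul_zero, setIntegral_eq_integral_of_forall_compl_eq_zero fun x hx ↦ by
      rw [image_eq_zero_of_notMem_tsupport hx, norm_zero]] at this
  by_contra hu0
  obtain ⟨x, hx⟩ := Function.ne_iff.1 hu0
  exact hu_int.not_gt <| hu.continuous.norm.integral_pos_of_hasCompactSupport_nonneg_nonzero
    huc.norm (fun _ ↦ norm_nonneg _) (norm_ne_zero_iff.2 hx)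

end Sobolev

section LevelSets

theorem exists_isCompact_subset_forall_diff_le {X : Type*} [TopologicalSpace X] {ω : Set X}
    {v : X → ℝ} {m k : ℝ} (hω : IsCompact (closure ω)) (hv : ContinuousOn v (closure ω))
    (hm : ∀ x ∈ frontier ω, v x ≤ m) (hmk : m < k) :
    ∃ K, IsCompact K ∧ K ⊆ ω ∧ ∀ x ∈ ω \ K, v x ≤ k := by
  refine ⟨closure ω ∩ v ⁻¹' Ici k, ?_, fun x hx ↦ ?_, fun x hx ↦ ?_⟩
  · exact hω.of_isClosed_subset (hv.preimage_isClosed_of_isClosed isClosed_closure isClosed_Ici)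
      inter_subset_left
  · by_contra hxω
    exact (hm x ⟨hx.1, fun hx_int ↦ hxω (interior_subset hx_int)⟩).not_gt (hmk.trans_le hx.2)
  · exact (not_le.1 fun hkv ↦ hx.2 ⟨subset_closure hx.1, hkv⟩).le

variable {E : Type*} [NormedAddCommGroup E] [NormedSpace ℝ E] {ω : Set E} {v : E → ℝ}

/-- The points of `ω` at which `v` exceeds the level `k` and is not critical. Restricting to
noncritical points makes the measure of this set tend to `0` as `k` increases to `sup v`, even when
the supremum is attained on a set of positive measure. -/
def noncriticalSuperlevel (ω : Set E) (v : E → ℝ) (k : ℝ) : Set E :=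
  {x ∈ ω | k < v x ∧ fderiv ℝ v x ≠ 0}

theorem noncriticalSuperlevel_subset (ω : Set E) (v : E → ℝ) (k : ℝ) :
    noncriticalSuperlevel ω v k ⊆ ω :=
  fun _ hx ↦ hx.1

theorem isOpen_noncriticalSuperlevel (hω : IsOpen ω) (hv : ContDiffOn ℝ 1 v ω) (k : ℝ) :
    IsOpen (noncriticalSuperlevel ω v k) := by
  have := hv.continuousOn.prodMk (hv.continuousOn_fderiv_of_isOpen hω le_rfl)
  exact this.isOpen_inter_preimage hω (isOpen_Ioi.prod isOpen_compl_singleton)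

theorem iInter_noncriticalSuperlevel_eq_empty (hω : IsOpen ω) {M : ℝ} (hM : ∀ x ∈ ω, v x ≤ M) :
    ⋂ k < M, noncriticalSuperlevel ω v k = ∅ := by
  refine eq_empty_of_forall_notMem fun x hx ↦ ?_
  have hxk : ∀ k < M, x ∈ noncriticalSuperlevel ω v k := mem_iInter₂.1 hx
  obtain ⟨hxω, -, hDv⟩ := hxk (M - 1) (sub_one_lt M)
  have hvx : v x = M := (hM x hxω).antisymm (le_of_forall_lt fun k hk ↦ (hxk k hk).2.1)
  have hmax : IsLocalMax v x := by
    filter_upwards [hω.mem_nhds hxω] with y hy using hvx ▸ hM y hy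
  exact hDv hmax.fderiv_eq_zero

theorem tendsto_measureReal_noncriticalSuperlevel [MeasurableSpace E] [OpensMeasurableSpace E]
    {μ : Measure E} (hω : IsOpen ω) (hμω : μ ω ≠ ∞) (hv : ContDiffOn ℝ 1 v ω) {M : ℝ}
    (hM : ∀ x ∈ ω, v x ≤ M) :
    Tendsto (fun k ↦ μ.real (noncriticalSuperlevel ω v k)) (𝓝[<] M) (𝓝 0) := by
  have lim : Tendsto (fun k ↦ μ (noncriticalSuperlevel ω v k)) (𝓝[<] M) (𝓝 0) := by
    have := tendsto_measure_biInter_gt (ι := ℝᵒᵈ) (μ := μ) (a := OrderDual.toDual M)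
      (s := fun k ↦ noncriticalSuperlevel ω v (OrderDual.ofDual k))
      (fun k _ ↦ (isOpen_noncriticalSuperlevel hω hv _).nullMeasurableSet)
      (fun i j _ hij x hx ↦ ⟨hx.1, lt_of_le_of_lt hij hx.2.1, hx.2.2⟩)
      ⟨OrderDual.toDual (M - 1), sub_one_lt M,
        measure_ne_top_of_subset (noncriticalSuperlevel_subset ω v _) hμω⟩
    rw [show ⋂ k > OrderDual.toDual M, noncriticalSuperlevel ω v (OrderDual.ofDual k) = ∅ from
      iInter_noncriticalSuperlevel_eq_empty hω hM, measure_empty] at this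
    exact this
  exact (ENNReal.tendsto_toReal ENNReal.zero_ne_top).comp lim

end LevelSets

section Truncation

variable {X : Type*} {ω K : Set X} {v : X → ℝ} {k r : ℝ}

/-- The truncation `(v - k)₊ ^ r` on `ω`, extended by `0` to the whole space. -/
def truncPow (ω : Set X) (v : X → ℝ) (k r : ℝ) : X → ℝ :=
  ω.indicator fun x ↦ (v x - k)⁺ ^ r

theorem truncPow_of_mem {x : X} (hx : x ∈ ω) : truncPow ω v k r x = (v x - k)⁺ ^ r :=
  indicator_of_mem hx _

theorem truncPow_nonneg (x : X) : 0 ≤ truncPow ω v k r x :=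
  indicator_nonneg (fun _ _ ↦ Real.rpow_nonneg (posPart_nonneg _) r) x

theorem le_of_truncPow_eq_zero {x : X} (hx : x ∈ ω) (h : truncPow ω v k r x = 0) : v x ≤ k := by
  by_contra! hkv
  rw [truncPow_of_mem hx, posPart_eq_self.2 (sub_nonneg.2 hkv.le)] at h
  exact (Real.rpow_pos_of_pos (sub_pos.2 hkv) r).ne' h

theorem tsupport_truncPow_subset [TopologicalSpace X] (hr : r ≠ 0) (hK : IsClosed K)
    (hvK : ∀ x ∈ ω \ K, v x ≤ k) : tsupport (truncPow ω v k r) ⊆ K := by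
  refine closure_minimal (fun x hx ↦ ?_) hK
  by_contra hxK
  have hxω : x ∈ ω := mem_of_indicator_ne_zero hx
  refine hx ?_
  rw [truncPow_of_mem hxω, posPart_eq_zero.2 (sub_nonpos.2 (hvK x ⟨hxω, hxK⟩)), Real.zero_rpow hr]

theorem hasCompactSupport_truncPow [TopologicalSpace X] [T2Space X] (hr : r ≠ 0) (hK : IsCompact K)
    (hvK : ∀ x ∈ ω \ K, v x ≤ k) : HasCompactSupport (truncPow ω v k r) :=
  hK.of_isClosed_subset (isClosed_tsupport _)
    (tsupport_truncPow_subset hr hK.isClosed hvK)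

variable {E : Type*} [NormedAddCommGroup E] [NormedSpace ℝ E] {ω K : Set E} {v : E → ℝ}

theorem contDiff_truncPow (hω : IsOpen ω) (hv : ContDiffOn ℝ 1 v ω) (hr : 1 < r) (hK : IsClosed K)
    (hKω : K ⊆ ω) (hvK : ∀ x ∈ ω \ K, v x ≤ k) : ContDiff ℝ 1 (truncPow ω v k r) := by
  refine contDiff_iff_contDiffAt.2 fun x ↦ ?_
  by_cases hx : x ∈ ω
  · have hxω := hω.mem_nhds hx
    have : ContDiffAt ℝ 1 (fun x ↦ (v x - k)⁺ ^ r) x :=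
      (contDiff_posPart_rpow hr).contDiffAt.comp x ((hv.contDiffAt hxω).sub contDiffAt_const)
    exact this.congr_of_eventuallyEq (eventually_of_mem hxω fun y hy ↦ truncPow_of_mem hy)
  · have hx_supp : x ∉ tsupport (truncPow ω v k r) := fun hxs ↦
      hx (hKω (tsupport_truncPow_subset (by linarith) hK hvK hxs))
    exact contDiffAt_const.congr_of_eventuallyEq (notMem_tsupport_iff_eventuallyEq.1 hx_supp)

theorem fderiv_truncPow (hω : IsOpen ω) (hv : ContDiffOn ℝ 1 v ω) (hr : 1 < r) {x : E}
    (hx : x ∈ ω) :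
    fderiv ℝ (truncPow ω v k r) x = (r * (v x - k)⁺ ^ (r - 1)) • fderiv ℝ v x := by
  have hxω := hω.mem_nhds hx
  have hvx : HasFDerivAt v (fderiv ℝ v x) x :=
    ((hv.contDiffAt hxω).differentiableAt one_ne_zero).hasFDerivAt
  have := (hasDerivAt_posPart_rpow hr (v x - k)).comp_hasFDerivAt x (hvx.sub_const k)
  exact (this.congr_of_eventuallyEq (eventually_of_mem hxω fun y hy ↦ truncPow_of_mem hy)).fderiv

end Truncation

section MaximumPrinciple

variable {E : Type*} [NormedAddCommGroup E] [NormedSpace ℝ E] {ω K : Set E} {F : E → E}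
  {h v : E → ℝ} {p c B C k : ℝ}

theorem norm_fderiv_truncPow_add_one_le (hω : IsOpen ω) (hv : ContDiffOn ℝ 1 v ω) (hp : 1 < p)
    (young : ∀ t w, 0 ≤ t → 0 < w →
      w ^ p * t + B * t ^ (p - 1) * w ^ 2 ≤ 2 * c * w * t ^ p + C * w ^ (p + 1))
    {x : E} (hx : x ∈ ω) (hcoer : c * ‖fderiv ℝ v x‖ ^ p ≤ fderiv ℝ v x (F x))
    (hgrowth : k < v x → h x ≤ B * ‖fderiv ℝ v x‖ ^ (p - 1)) :
    ‖fderiv ℝ (truncPow ω v k (p + 1)) x‖ ≤ (p + 1) *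
      (C * (noncriticalSuperlevel ω v k).indicator (truncPow ω v k (p + 1)) x +
        (fderiv ℝ (truncPow ω v k 2) x (F x) - h x * truncPow ω v k 2 x)) := by
  have hu : ‖fderiv ℝ (truncPow ω v k (p + 1)) x‖ =
      (p + 1) * ((v x - k)⁺ ^ p * ‖fderiv ℝ v x‖) := by
    rw [fderiv_truncPow hω hv (by linarith) hx, norm_smul, Real.norm_of_nonneg (by positivity),
      add_sub_cancel_right, mul_assoc]
  have hφ : fderiv ℝ (truncPow ω v k 2) x (F x) = 2 * (v x - k)⁺ * fderiv ℝ v x (F x) := by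
    rw [fderiv_truncPow hω hv one_lt_two hx, smul_apply, smul_eq_mul,
      show (2 : ℝ) - 1 = 1 by norm_num, Real.rpow_one]
  rw [hu, hφ, truncPow_of_mem hx, Real.rpow_two]
  gcongr
  rcases le_or_gt (v x) k with hvk | hkv
  · have hxE : x ∉ noncriticalSuperlevel ω v k := fun hxE ↦ hvk.not_gt hxE.2.1
    simp [posPart_eq_zero.2 (sub_nonpos.2 hvk), Real.zero_rpow (by linarith : p ≠ 0), hxE]
  have hw : 0 < v x - k := sub_pos.2 hkv
  rw [posPart_eq_self.2 hw.le]
  have hh := mul_le_mul_of_nonneg_right (hgrowth hkv) (sq_nonneg (v x - k))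
  by_cases hDv : fderiv ℝ v x = 0
  · have hxE : x ∉ noncriticalSuperlevel ω v k := fun hxE ↦ hxE.2.2 hDv
    simp only [hDv, norm_zero, Real.zero_rpow (by linarith : p - 1 ≠ 0), mul_zero, zero_mul] at hh
    simpa [hDv, hxE] using hh
  · have hxE : x ∈ noncriticalSuperlevel ω v k := ⟨hx, hkv, hDv⟩
    rw [indicator_of_mem hxE, truncPow_of_mem hx, posPart_eq_self.2 hw.le]
    have hD := mul_le_mul_of_nonneg_left hcoer hw.le
    linarith [young ‖fderiv ℝ v x‖ (v x - k) (norm_nonneg _) hw]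

variable [FiniteDimensional ℝ E] [MeasurableSpace E] [BorelSpace E] {μ : Measure E}

theorem IsWeakDivNonneg.integral_norm_fderiv_truncPow_le [IsFiniteMeasureOnCompacts μ]
    (hdiv : IsWeakDivNonneg μ F h ω) (hω : IsOpen ω) (hF : LocallyIntegrableOn F ω μ)
    (hh : LocallyIntegrableOn h ω μ) (hv : ContDiffOn ℝ 1 v ω) (hp : 1 < p)
    (young : ∀ t w, 0 ≤ t → 0 < w →
      w ^ p * t + B * t ^ (p - 1) * w ^ 2 ≤ 2 * c * w * t ^ p + C * w ^ (p + 1))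
    (hcoer : ∀ x ∈ ω, c * ‖fderiv ℝ v x‖ ^ p ≤ fderiv ℝ v x (F x))
    (hK : IsCompact K) (hKω : K ⊆ ω) (hgrowth : ∀ x ∈ K, h x ≤ B * ‖fderiv ℝ v x‖ ^ (p - 1))
    (hvK : ∀ x ∈ ω \ K, v x ≤ k) :
    ∫ x, ‖fderiv ℝ (truncPow ω v k (p + 1)) x‖ ∂μ ≤
      (p + 1) * C * ∫ x in noncriticalSuperlevel ω v k, truncPow ω v k (p + 1) x ∂μ := by
  set u := truncPow ω v k (p + 1)
  set φ := truncPow ω v k 2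
  set S := noncriticalSuperlevel ω v k
  have hr : 1 < p + 1 := by linarith
  have hu : ContDiff ℝ 1 u := contDiff_truncPow hω hv hr hK.isClosed hKω hvK
  have hφ : ContDiff ℝ 1 φ := contDiff_truncPow hω hv one_lt_two hK.isClosed hKω hvK
  have huK : tsupport u ⊆ K := tsupport_truncPow_subset (by linarith) hK.isClosed hvK
  have hφK : tsupport φ ⊆ K := tsupport_truncPow_subset two_ne_zero hK.isClosed hvK
  have huc : HasCompactSupport u := hasCompactSupport_truncPow (by linarith) hK hvK
  have hφc : HasCompactSupport φ := hasCompactSupport_truncPow two_ne_zero hK hvK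
  have hS : MeasurableSet S := (isOpen_noncriticalSuperlevel hω hv k).measurableSet
  have hDu_int : Integrable (fun x ↦ ‖fderiv ℝ u x‖) μ :=
    ((hu.continuous_fderiv one_ne_zero).integrable_of_hasCompactSupport (huc.fderiv ℝ)).norm
  have hu_int : Integrable (fun x ↦ C * S.indicator u x) μ :=
    ((hu.continuous.integrable_of_hasCompactSupport huc).indicator hS).const_mul C
  have hφ_int := integrable_fderiv_apply_sub_mul hF hh hφ hφc (hφK.trans hKω)
  have htest := hdiv.integral_nonpos_of_contDiff_one hω hF hh hφ hφc (hφK.trans hKω) truncPow_nonneg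
  have hDu_le : ∀ x ∈ ω, ‖fderiv ℝ u x‖ ≤
      (p + 1) * (C * S.indicator u x + (fderiv ℝ φ x (F x) - h x * φ x)) := fun x hx ↦
    norm_fderiv_truncPow_add_one_le hω hv hp young hx (hcoer x hx) fun hkv ↦
      hgrowth x (not_not.1 fun hxK ↦ (hvK x ⟨hx, hxK⟩).not_gt hkv)
  have hDu_off : ∀ x ∉ ω, ‖fderiv ℝ u x‖ = 0 := fun x hx ↦
    norm_eq_zero.2 (fderiv_of_notMem_tsupport ℝ fun hxu ↦ hx (hKω (huK hxu)))
  calc ∫ x, ‖fderiv ℝ u x‖ ∂μ = ∫ x in ω, ‖fderiv ℝ u x‖ ∂μ :=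
        (setIntegral_eq_integral_of_forall_compl_eq_zero hDu_off).symm
    _ ≤ ∫ x in ω, (p + 1) * (C * S.indicator u x + (fderiv ℝ φ x (F x) - h x * φ x)) ∂μ :=
        setIntegral_mono_on hDu_int.integrableOn
          ((hu_int.add hφ_int).const_mul (p + 1)).integrableOn hω.measurableSet hDu_le
    _ = (p + 1) * (C * (∫ x in S, u x ∂μ) +
          ∫ x in ω, (fderiv ℝ φ x (F x) - h x * φ x) ∂μ) := by
        rw [integral_const_mul, integral_add hu_int.integrableOn hφ_int.integrableOn,
          integral_const_mul, setIntegral_indicator hS,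
          inter_eq_right.2 (noncriticalSuperlevel_subset ω v k)]
    _ ≤ (p + 1) * C * ∫ x in S, u x ∂μ := by
        rw [mul_assoc]
        gcongr
        linarith

theorem IsWeakDivNonneg.exists_lt_forall_le [μ.IsAddHaarMeasure] (hE : 2 ≤ Module.finrank ℝ E)
    (hdiv : IsWeakDivNonneg μ F h ω) (hω : IsOpen ω) (hμω : μ ω ≠ ∞)
    (hF : LocallyIntegrableOn F ω μ) (hh : LocallyIntegrableOn h ω μ) (hv : ContDiffOn ℝ 1 v ω)
    (hp : 1 < p) (hc : 0 < c) (hcoer : ∀ x ∈ ω, c * ‖fderiv ℝ v x‖ ^ p ≤ fderiv ℝ v x (F x))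
    (hK : IsCompact K) (hKω : K ⊆ ω) (hgrowth : ∀ x ∈ K, h x ≤ B * ‖fderiv ℝ v x‖ ^ (p - 1))
    {M : ℝ} (hkM : k < M) (hvK : ∀ x ∈ ω \ K, v x ≤ k) (hvM : ∀ x ∈ ω, v x ≤ M) :
    ∃ l < M, ∀ x ∈ ω, v x ≤ l := by
  obtain ⟨C, young⟩ := exists_rpow_mul_add_le hp (mul_pos two_pos hc) B
  obtain ⟨δ, hδ, eq_zero⟩ :=
    exists_pos_eq_zero_of_integral_fderiv_le (G := ℝ) μ hE ((p + 1) * C)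
  have hsmall : ∀ᶠ l in 𝓝[<] M, μ.real (noncriticalSuperlevel ω v l) < δ :=
    (tendsto_measureReal_noncriticalSuperlevel hω hμω hv hvM).eventually_lt_const hδ
  obtain ⟨l, hlδ, hkl, hlM⟩ := (hsmall.and (Ioo_mem_nhdsLT hkM)).exists
  have hvK' : ∀ x ∈ ω \ K, v x ≤ l := fun x hx ↦ (hvK x hx).trans hkl.le
  have hr : 1 < p + 1 := by linarith
  have hzero : truncPow ω v l (p + 1) = 0 := by
    refine eq_zero _ (contDiff_truncPow hω hv hr hK.isClosed hKω hvK')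
      (hasCompactSupport_truncPow (by linarith) hK hvK') (noncriticalSuperlevel ω v l)
      (measure_ne_top_of_subset (noncriticalSuperlevel_subset ω v l) hμω) hlδ ?_
    simpa only [Real.norm_of_nonneg (truncPow_nonneg _)] using
      hdiv.integral_norm_fderiv_truncPow_le hω hF hh hv hp young hcoer hK hKω hgrowth hvK'
  exact ⟨l, hlM, fun x hx ↦ le_of_truncPow_eq_zero hx (congrFun hzero x)⟩

theorem IsWeakDivNonneg.le_of_forall_frontier_le [μ.IsAddHaarMeasure]
    (hE : 2 ≤ Module.finrank ℝ E) (hdiv : IsWeakDivNonneg μ F h ω) (hω : IsOpen ω)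
    (hωbdd : Bornology.IsBounded ω) (hF : LocallyIntegrableOn F ω μ)
    (hh : LocallyIntegrableOn h ω μ) (hvc : ContinuousOn v (closure ω)) (hv : ContDiffOn ℝ 1 v ω)
    (hp : 1 < p) (hc : 0 < c) (hcoer : ∀ x ∈ ω, c * ‖fderiv ℝ v x‖ ^ p ≤ fderiv ℝ v x (F x))
    (hgrowth : ∀ K ⊆ ω, IsCompact K → ∃ B, ∀ x ∈ K, h x ≤ B * ‖fderiv ℝ v x‖ ^ (p - 1))
    {m : ℝ} (hm : ∀ x ∈ frontier ω, v x ≤ m) {x : E} (hx : x ∈ closure ω) : v x ≤ m := by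
  have hωc : IsCompact (closure ω) := hωbdd.isCompact_closure
  obtain ⟨x₀, hx₀, hmax⟩ := hωc.exists_isMaxOn ⟨x, hx⟩ hvc
  refine (hmax hx).trans (not_lt.1 fun hlt ↦ ?_)
  have hx₀ω : x₀ ∈ ω := by
    by_contra hx₀ω
    exact (hm x₀ ⟨hx₀, fun hx_int ↦ hx₀ω (interior_subset hx_int)⟩).not_gt hlt
  obtain ⟨k, hmk, hkM⟩ := exists_between hlt
  obtain ⟨K, hK, hKω, hvK⟩ := exists_isCompact_subset_forall_diff_le hωc hvc hm hmk
  obtain ⟨B, hB⟩ := hgrowth K hKω hK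
  obtain ⟨l, hl, hvl⟩ := hdiv.exists_lt_forall_le hE hω
    (measure_ne_top_of_subset subset_closure hωc.measure_ne_top) hF hh hv hp hc hcoer hK hKω hB
    hkM hvK fun y hy ↦ hmax (subset_closure hy)
  exact (hvl x₀ hx₀ω).not_gt hl

end MaximumPrinciple

section Gradient

variable {E : Type*} [NormedAddCommGroup E] [InnerProductSpace ℝ E] [CompleteSpace E]

theorem norm_gradient_eq_norm_fderiv (v : E → ℝ) (x : E) : ‖gradient v x‖ = ‖fderiv ℝ v x‖ :=
  (InnerProductSpace.toDual ℝ E).symm.norm_map (fderiv ℝ v x)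

theorem continuousOn_gradient_of_isOpen {ω : Set E} {v : E → ℝ} (hω : IsOpen ω)
    (hv : ContDiffOn ℝ 1 v ω) : ContinuousOn (gradient v) ω :=
  (InnerProductSpace.toDual ℝ E).symm.continuous.comp_continuousOn
    (hv.continuousOn_fderiv_of_isOpen hω le_rfl)

theorem measurable_gradient [MeasurableSpace E] [BorelSpace E] (v : E → ℝ) :
    Measurable (gradient v) :=
  (InnerProductSpace.toDual ℝ E).symm.continuous.measurable.comp (measurable_fderiv ℝ v)

end Gradient

theorem locallyIntegrableOn_of_forall_isCompact_exists_norm_le {X G : Type*} [TopologicalSpace X]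
    [T2Space X] [LocallyCompactSpace X] [MeasurableSpace X] [OpensMeasurableSpace X]
    [NormedAddCommGroup G] {μ : Measure X} [IsFiniteMeasureOnCompacts μ] {ω : Set X} {f : X → G}
    (hω : IsOpen ω) (hf : AEStronglyMeasurable f μ)
    (hbound : ∀ K ⊆ ω, IsCompact K → ∃ C, ∀ x ∈ K, ‖f x‖ ≤ C) : LocallyIntegrableOn f ω μ := by
  refine (locallyIntegrableOn_iff hω.isLocallyClosed).2 fun K hKω hK ↦ ?_
  obtain ⟨C, hC⟩ := hbound K hKω hK
  exact .of_bound hK.measure_lt_top hf.restrict C (ae_restrict_of_forall_mem hK.measurableSet hC)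

section Structure

variable {n : ℕ} {p C₁ C₂ α : ℝ} {A : Euc n → Euc n → Euc n} {b : Euc n → ℝ} {ω : Set (Euc n)}
  {v : Euc n → ℝ}

theorem StructCond.locallyIntegrableOn (hA : StructCond A p C₁ C₂) (hp : 1 ≤ p) (hω : IsOpen ω)
    (hv : ContDiffOn ℝ 1 v ω) : LocallyIntegrableOn (fun x ↦ A x (gradient v x)) ω := by
  refine locallyIntegrableOn_of_forall_isCompact_exists_norm_le hω
    (hA.1.comp (measurable_id.prodMk (measurable_gradient v))).aestronglyMeasurable
    fun K hKω hK ↦ ?_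
  have hcont : ContinuousOn (fun x ↦ C₂ * ‖gradient v x‖ ^ (p - 1)) K :=
    (((continuousOn_gradient_of_isOpen hω hv).mono hKω).norm.rpow_const
      fun _ _ ↦ .inr (by linarith)).const_mul C₂
  obtain ⟨C, hC⟩ := hK.bddAbove_image hcont
  exact ⟨C, fun x hx ↦ (hA.2 x _).2.trans (hC (mem_image_of_mem _ hx))⟩

theorem LocBdd.exists_mul_rpow_le (hb : LocBdd b) (hb0 : ∀ x, 0 ≤ b x) {q : ℝ} (hq : 0 ≤ q)
    (hqα : q ≤ α) {K : Set (Euc n)} (hK : IsCompact K) {g : Euc n → ℝ} (hg : ContinuousOn g K)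
    (hg0 : ∀ x ∈ K, 0 ≤ g x) : ∃ B, ∀ x ∈ K, b x * g x ^ α ≤ B * g x ^ q := by
  obtain ⟨B, hB⟩ := hb K hK
  obtain ⟨L, hL⟩ := hK.bddAbove_image hg
  refine ⟨B * L ^ (α - q), fun x hx ↦ ?_⟩
  have hgL : g x ≤ L := hL (mem_image_of_mem g hx)
  have hgx : 0 ≤ g x := hg0 x hx
  calc b x * g x ^ α = b x * (g x ^ (α - q) * g x ^ q) := by
        rw [← Real.rpow_add_of_nonneg hgx (by linarith) hq, sub_add_cancel]
    _ ≤ B * (L ^ (α - q) * g x ^ q) := by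
        gcongr
        · exact (hb0 x).trans (hB x hx)
        · exact hB x hx
    _ = B * L ^ (α - q) * g x ^ q := (mul_assoc _ _ _).symm

theorem LocBdd.locallyIntegrableOn_mul_norm_gradient_rpow (hb : LocBdd b) (hbm : Measurable b)
    (hb0 : ∀ x, 0 ≤ b x) (hα : 0 ≤ α) (hω : IsOpen ω) (hv : ContDiffOn ℝ 1 v ω) :
    LocallyIntegrableOn (fun x ↦ b x * ‖gradient v x‖ ^ α) ω := by
  refine locallyIntegrableOn_of_forall_isCompact_exists_norm_le hω
    (hbm.mul ((measurable_gradient v).norm.pow_const α)).aestronglyMeasurable fun K hKω hK ↦ ?_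
  obtain ⟨B, hB⟩ := hb.exists_mul_rpow_le hb0 le_rfl hα hK
    ((continuousOn_gradient_of_isOpen hω hv).mono hKω).norm fun _ _ ↦ norm_nonneg _
  refine ⟨B, fun x hx ↦ ?_⟩
  rw [Real.norm_of_nonneg (mul_nonneg (hb0 x) (by positivity))]
  simpa only [Real.rpow_zero, mul_one] using hB x hx

theorem IsWeakSol.isWeakDivNonneg (hsol : IsWeakSol A b α (fun _ ↦ 0) ω v)
    (hF : LocallyIntegrableOn (fun x ↦ A x (gradient v x)) ω)
    (hh : LocallyIntegrableOn (fun x ↦ b x * ‖gradient v x‖ ^ α) ω) :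
    IsWeakDivNonneg volume (fun x ↦ A x (gradient v x)) (fun x ↦ b x * ‖gradient v x‖ ^ α) ω := by
  intro φ hφ hφc hφω hφ0
  have htest := hsol φ hφ hφc hφω hφ0
  have hφ1 : ContDiff ℝ 1 φ := hφ.of_le (by exact_mod_cast le_top)
  simp only [zero_mul, integral_zero, inner_gradient_right, conj_trivial] at htest
  rw [integral_sub (integrable_fderiv_apply hF hφ1 hφc hφω).integrableOn
    (integrable_mul_of_hasCompactSupport hh hφ.continuous hφc hφω).integrableOn]
  linarith

end Structure

section Frontier

theorem nonempty_frontier_of_isBounded {E : Type*} [NormedAddCommGroup E] [NormedSpace ℝ E]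
    [Nontrivial E] {s : Set E} (hs : s.Nonempty) (hsb : Bornology.IsBounded s) :
    (frontier s).Nonempty :=
  nonempty_frontier_iff.2 ⟨hs, fun h ↦ NormedSpace.unbounded_univ ℝ E (h ▸ hsb)⟩

theorem sSup_image_closure_eq_sSup_image_frontier {X : Type*} [TopologicalSpace X] {s : Set X}
    {v : X → ℝ} (hs : IsCompact (closure s)) (hv : ContinuousOn v (closure s))
    (hne : (frontier s).Nonempty)
    (hle : ∀ m, (∀ x ∈ frontier s, v x ≤ m) → ∀ x ∈ closure s, v x ≤ m) :
    sSup (v '' closure s) = sSup (v '' frontier s) := by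
  have hbdd : BddAbove (v '' closure s) := hs.bddAbove_image hv
  have hsub : v '' frontier s ⊆ v '' closure s := image_mono frontier_subset_closure
  refine le_antisymm (csSup_le ((hne.image v).mono hsub) ?_)
    (csSup_le_csSup hbdd (hne.image v) hsub)
  exact forall_mem_image.2 <| hle _ fun x hx ↦ le_csSup (hbdd.mono hsub) (mem_image_of_mem v hx)

end Frontier

theorem stmt_9_general (n : ℕ) (hn : 2 ≤ n) (p C₁ C₂ α : ℝ) (hp : 1 < p) (hC₁ : 0 < C₁)
    (hα : p - 1 ≤ α) (A : Euc n → Euc n → Euc n) (hA : StructCond A p C₁ C₂)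
    (b : Euc n → ℝ) (hbm : Measurable b) (hb0 : ∀ x, 0 ≤ b x) (hbloc : LocBdd b)
    (ω : Set (Euc n)) (hω : IsOpen ω) (hωne : ω.Nonempty) (hωbdd : Bornology.IsBounded ω)
    (v : Euc n → ℝ) (hvc : ContinuousOn v (closure ω)) (hv1 : ContDiffOn ℝ 1 v ω)
    (hsol : IsWeakSol A b α (fun _ ↦ 0) ω v) :
    sSup (v '' closure ω) = sSup (v '' frontier ω) := by
  have hdim : 2 ≤ Module.finrank ℝ (Euc n) := by rwa [finrank_euclideanSpace_fin]
  have : Nontrivial (Euc n) := Module.nontrivial_of_finrank_pos (R := ℝ) (by omega)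
  have hF := hA.locallyIntegrableOn hp.le hω hv1
  have hh := hbloc.locallyIntegrableOn_mul_norm_gradient_rpow hbm hb0 (by linarith) hω hv1
  have hcoer : ∀ x ∈ ω, C₁ * ‖fderiv ℝ v x‖ ^ p ≤ fderiv ℝ v x (A x (gradient v x)) := by
    intro x _
    rw [← norm_gradient_eq_norm_fderiv, ← inner_gradient_left]
    exact (hA.2 x _).1
  have hgrowth : ∀ K ⊆ ω, IsCompact K →
      ∃ B, ∀ x ∈ K, b x * ‖gradient v x‖ ^ α ≤ B * ‖fderiv ℝ v x‖ ^ (p - 1) := by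
    intro K hKω hK
    simp only [← norm_gradient_eq_norm_fderiv]
    exact hbloc.exists_mul_rpow_le hb0 (by linarith) hα hK
      ((continuousOn_gradient_of_isOpen hω hv1).mono hKω).norm fun _ _ ↦ norm_nonneg _
  refine sSup_image_closure_eq_sSup_image_frontier hωbdd.isCompact_closure hvc
    (nonempty_frontier_of_isBounded hωne hωbdd) fun m hm x hx ↦ ?_
  exact (hsol.isWeakDivNonneg hF hh).le_of_forall_frontier_le hdim hω hωbdd hF hh hvc hv1 hp hC₁
    hcoer hgrowth hm hx

/-- Lemma 4.2 (maximum principle): a nonnegative solution of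
`div A(x,Dv) + b(x)|Dv|^α ≥ 0` on a nonempty bounded open set `ω` attains its maximum on
the boundary: `max_{cl ω} v = max_{∂ω} v`. -/
theorem stmt_9 (n : ℕ) (hn : 2 ≤ n) (p C₁ C₂ α : ℝ) (hp : 1 < p)
    (hC₁ : 0 < C₁) (hC₂ : 0 < C₂) (hα₁ : p - 1 ≤ α) (hα₂ : α ≤ p)
    (A : Euc n → Euc n → Euc n) (hA : StructCond A p C₁ C₂)
    (b : Euc n → ℝ) (hbm : Measurable b) (hb0 : ∀ x, 0 ≤ b x) (hbloc : LocBdd b)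
    (ω : Set (Euc n)) (hω : IsOpen ω) (hωne : ω.Nonempty) (hωbdd : Bornology.IsBounded ω)
    (v : Euc n → ℝ) (hvc : ContinuousOn v (closure ω)) (hv1 : ContDiffOn ℝ 1 v ω)
    (hv0 : ∀ x ∈ closure ω, 0 ≤ v x)
    (hint : IntegrableOn (fun x => ‖gradient v x‖ ^ p) ω)
    (hsol : IsWeakSol A b α (fun _ => 0) ω v) :
    sSup (v '' closure ω) = sSup (v '' frontier ω) :=
  stmt_9_general n hn p C₁ C₂ α hp hC₁ hα₁ A hA b hbm hb0 hbloc ω hω hωne hωbdd v hvc hv1 hsol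
end
end

section
/- (Caccioppoli-type inequality.) There exists a constant C > 0, depending only on n, p, α, C₁ and C₂, with the following property: let r > 0, z ∈ ℝⁿ, and let v be a bounded nonnegative C¹ function on the open ball B_r(z) which is a solution of div A(x,Dv) + b(x)|Dv|^α ≥ 0 in B_r(z) and satisfies r^{p−α}·(sup_{B_r(z)} v)^{α−p+1}·(ess sup_{B_r(z)} b) ≤ C₁/2. Then for all real numbers 0 < r₁ < r₂ ≤ r and every real γ ≥ 1 one has ∫_{B_{r₁}(z)} |D(v^γ)(x)|^p dx ≤ (C/(r₂ − r₁)^p)·∫_{B_{r₂}(z)} v(x)^{γp} dx. -/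
open MeasureTheory Metric Set Filter
open scoped RealInnerProductSpace ENNReal

noncomputable section

/-!
Test the inequality with `φ = η ^ p * v ^ s`, where `s = p * (γ - 1) + 1` and `η` is a cutoff
function between the balls of radius `r₁` and `r₂`. Coercivity produces the energy
`s * ∫ η ^ p * v ^ (s - 1) * ‖Dv‖ ^ p` with the factor `C₁`. Young's inequality bounds the term with
`Dη` by `C₁ / 4` times the energy plus a multiple of `(r₂ - r₁) ^ (-p) * ∫ v ^ (γ * p)` and, thanks
to the smallness hypothesis, the term with `b` by `C₁ / 2` times the energy plus such a multiple.
As `γ ≤ s`, the quarter of the energy that is left controls `∫ ‖D(v ^ γ)‖ ^ p`. Since `φ` is only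
`C¹`, it is admitted as a test function by mollification.
-/

section Mollification

open ContinuousLinearMap

variable {E : Type*} [NormedAddCommGroup E] [NormedSpace ℝ E] [FiniteDimensional ℝ E]
  {φ : E → ℝ} {ε : ℝ}

section Convolution

variable [MeasurableSpace E] [BorelSpace E] {μ : Measure E} [μ.IsAddHaarMeasure]

lemma tsupport_normed_convolution_subset_s12 {r : ℝ} (f : ContDiffBump (0 : E)) (hf : f.rOut ≤ r) :
    tsupport (convolution (f.normed μ) φ (lsmul ℝ ℝ) μ) ⊆ cthickening r (tsupport φ) := by
  refine closure_minimal ((support_convolution_subset _).trans ?_) isClosed_cthickening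
  rw [f.support_normed_eq]
  rintro _ ⟨a, ha, b, hb, rfl⟩
  refine mem_cthickening_of_dist_le _ b r _ (subset_tsupport φ hb) ?_
  rw [mem_ball_zero_iff] at ha
  simpa using ha.le.trans hf

lemma fderiv_normed_convolution (f : ContDiffBump (0 : E)) (hφ : ContDiff ℝ 1 φ)
    (hc : HasCompactSupport φ) (x : E) :
    fderiv ℝ (convolution (f.normed μ) φ (lsmul ℝ ℝ) μ) x =
      convolution (f.normed μ) (fderiv ℝ φ) (lsmul ℝ ℝ) μ x :=
  (hc.hasFDerivAt_convolution_right (lsmul ℝ ℝ) f.continuous_normed.locallyIntegrable hφ x).fderiv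

lemma exists_pos_forall_dist_normed_convolution_le {F : Type*} [NormedAddCommGroup F]
    [NormedSpace ℝ F] [CompleteSpace F] {g : E → F} (hg : Continuous g)
    (hc : HasCompactSupport g) (hε : 0 < ε) :
    ∃ δ > 0, ∀ f : ContDiffBump (0 : E), f.rOut ≤ δ →
      ∀ x, dist (convolution (f.normed μ) g (lsmul ℝ ℝ) μ x) (g x) ≤ ε := by
  obtain ⟨δ, hδ, hgδ⟩ :=
    Metric.uniformContinuous_iff.1 (hc.uniformContinuous_of_continuous hg) ε hε
  exact ⟨δ, hδ, fun f hf x => f.dist_normed_convolution_le hg.aestronglyMeasurable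
    fun y hy => (hgδ (lt_of_lt_of_le hy hf)).le⟩

end Convolution

lemma exists_contDiff_nonneg_approx {δ : ℝ} (hφ : ContDiff ℝ 1 φ) (hc : HasCompactSupport φ)
    (h₀ : ∀ x, 0 ≤ φ x) (hδ : 0 < δ) (hε : 0 < ε) :
    ∃ ψ : E → ℝ, ContDiff ℝ (⊤ : ℕ∞) ψ ∧ tsupport ψ ⊆ cthickening δ (tsupport φ) ∧
      (∀ x, 0 ≤ ψ x) ∧ (∀ x, |ψ x - φ x| ≤ ε) ∧ ∀ x, ‖fderiv ℝ ψ x - fderiv ℝ φ x‖ ≤ ε := by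
  borelize E
  let ν : Measure E := .addHaar
  obtain ⟨δ₀, hδ₀, happrox⟩ :=
    exists_pos_forall_dist_normed_convolution_le (μ := ν) hφ.continuous hc hε
  obtain ⟨δ₁, hδ₁, happrox'⟩ := exists_pos_forall_dist_normed_convolution_le (μ := ν)
    (hφ.continuous_fderiv one_ne_zero) (hc.fderiv ℝ) hε
  let R := min δ (min δ₀ δ₁)
  have hR : 0 < R := by positivity
  let f : ContDiffBump (0 : E) := ⟨R / 2, R, half_pos hR, half_lt_self hR⟩
  refine ⟨convolution (f.normed ν) φ (lsmul ℝ ℝ) ν,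
    f.hasCompactSupport_normed.contDiff_convolution_left _ f.contDiff_normed
      hφ.continuous.locallyIntegrable,
    tsupport_normed_convolution_subset_s12 f (min_le_left _ _),
    fun x => integral_nonneg fun t => mul_nonneg (f.nonneg_normed t) (h₀ _),
    happrox f ((min_le_right _ _).trans (min_le_left _ _)), fun x => ?_⟩
  rw [← dist_eq_norm, fderiv_normed_convolution f hφ hc]
  exact happrox' f ((min_le_right _ _).trans (min_le_right _ _)) x

end Mollification

section WeakInequality

variable {E : Type*} [NormedAddCommGroup E] [MeasurableSpace E] {μ : Measure E}
  {U K : Set E} {G : E → E} {h φ ψ : E → ℝ} {ε : ℝ}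

lemma integrable_mul_of_tsupport_subset [BorelSpace E] (hh : LocallyIntegrableOn h U μ)
    (hφ : Continuous φ) (hc : HasCompactSupport φ) (hs : tsupport φ ⊆ U) :
    Integrable (fun x => h x * φ x) μ := by
  refine (integrableOn_iff_integrable_of_support_subset fun x hx => ?_).1
    ((hh.integrableOn_compact_subset hs hc).mul_continuousOn hφ.continuousOn hc)
  exact subset_tsupport φ (right_ne_zero_of_mul hx)

variable [NormedSpace ℝ E]

/-- The inequality `div G + h ≥ 0` in `U`, tested against nonnegative smooth functions. The
integrals extend over the whole space because the test functions vanish off `U`. -/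
def WeakDivAddNonneg (μ : Measure E) (G : E → E) (h : E → ℝ) (U : Set E) : Prop :=
  ∀ φ : E → ℝ, ContDiff ℝ (⊤ : ℕ∞) φ → HasCompactSupport φ → tsupport φ ⊆ U → (∀ x, 0 ≤ φ x) →
    ∫ x, fderiv ℝ φ x (G x) ∂μ ≤ ∫ x, h x * φ x ∂μ

lemma WeakDivAddNonneg.mono {V : Set E} (hU : WeakDivAddNonneg μ G h U) (hVU : V ⊆ U) :
    WeakDivAddNonneg μ G h V :=
  fun φ hφ hc hs h₀ => hU φ hφ hc (hs.trans hVU) h₀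

lemma abs_integral_mul_sub_fderiv_apply_le (hh : IntegrableOn h K μ) (hG : IntegrableOn G K μ)
    (hs : tsupport φ ⊆ K) (hφ : ∀ x, |φ x| ≤ ε) (hφ' : ∀ x, ‖fderiv ℝ φ x‖ ≤ ε) :
    |∫ x, (h x * φ x - fderiv ℝ φ x (G x)) ∂μ| ≤ ε * ∫ x in K, (|h x| + ‖G x‖) ∂μ := by
  have hpointwise (x : E) : ‖h x * φ x - fderiv ℝ φ x (G x)‖ ≤ ε * (|h x| + ‖G x‖) := by
    calc ‖h x * φ x - fderiv ℝ φ x (G x)‖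
        ≤ |h x| * |φ x| + ‖fderiv ℝ φ x‖ * ‖G x‖ :=
          (norm_sub_le _ _).trans (add_le_add (norm_mul _ _).le ((fderiv ℝ φ x).le_opNorm _))
      _ ≤ |h x| * ε + ε * ‖G x‖ := by gcongr; exacts [hφ x, hφ' x]
      _ = ε * (|h x| + ‖G x‖) := by ring
  rw [← setIntegral_eq_integral_of_forall_compl_eq_zero (s := K) fun x hx => ?_,
    ← integral_const_mul]
  · exact norm_integral_le_of_norm_le ((hh.abs.add hG.norm).const_mul ε)
      (ae_of_all _ hpointwise)
  · have hx' : x ∉ tsupport φ := fun hx' => hx (hs hx')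
    simp [image_eq_zero_of_notMem_tsupport hx', fderiv_of_notMem_tsupport ℝ hx']

variable [BorelSpace E] [FiniteDimensional ℝ E]

lemma integrable_fderiv_apply_of_tsupport_subset (hG : LocallyIntegrableOn G U μ)
    (hφ : ContDiff ℝ 1 φ) (hc : HasCompactSupport φ) (hs : tsupport φ ⊆ U) :
    Integrable (fun x => fderiv ℝ φ x (G x)) μ := by
  have hφ' : Continuous (fderiv ℝ φ) := hφ.continuous_fderiv one_ne_zero
  obtain ⟨C, hC⟩ := (hc.fderiv ℝ).exists_bound_of_continuous hφ'
  have hGK : IntegrableOn G (tsupport φ) μ := hG.integrableOn_compact_subset hs hc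
  refine (integrableOn_iff_integrable_of_support_subset (s := tsupport φ) fun x hx => ?_).1
    ((hGK.norm.const_mul C).mono'
      ((ContinuousLinearMap.id ℝ (E →L[ℝ] ℝ)).aestronglyMeasurable_comp₂
        hφ'.aestronglyMeasurable hGK.aestronglyMeasurable)
      (ae_of_all _ fun x => (fderiv ℝ φ x).le_of_opNorm_le (hC x) (G x)))
  contrapose! hx
  simp [fderiv_of_notMem_tsupport ℝ hx]

lemma integrable_mul_sub_fderiv_apply (hh : LocallyIntegrableOn h U μ)
    (hG : LocallyIntegrableOn G U μ) (hφ : ContDiff ℝ 1 φ) (hc : HasCompactSupport φ)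
    (hs : tsupport φ ⊆ U) : Integrable (fun x => h x * φ x - fderiv ℝ φ x (G x)) μ :=
  (integrable_mul_of_tsupport_subset hh hφ.continuous hc hs).sub
    (integrable_fderiv_apply_of_tsupport_subset hG hφ hc hs)

lemma abs_integral_mul_sub_fderiv_apply_sub_le (hh : IntegrableOn h K μ)
    (hG : IntegrableOn G K μ) (hK : IsCompact K) (hψ : ContDiff ℝ 1 ψ) (hφ : ContDiff ℝ 1 φ)
    (hψK : tsupport ψ ⊆ K) (hφK : tsupport φ ⊆ K) (hψφ : ∀ x, |ψ x - φ x| ≤ ε)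
    (hψφ' : ∀ x, ‖fderiv ℝ ψ x - fderiv ℝ φ x‖ ≤ ε) :
    |(∫ x, (h x * ψ x - fderiv ℝ ψ x (G x)) ∂μ) - ∫ x, (h x * φ x - fderiv ℝ φ x (G x)) ∂μ| ≤
      ε * ∫ x in K, (|h x| + ‖G x‖) ∂μ := by
  have hint {θ : E → ℝ} (hθ : ContDiff ℝ 1 θ) (hθK : tsupport θ ⊆ K) :
      Integrable (fun x => h x * θ x - fderiv ℝ θ x (G x)) μ :=
    integrable_mul_sub_fderiv_apply hh.locallyIntegrableOn hG.locallyIntegrableOn hθ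
      (hK.of_isClosed_subset (isClosed_tsupport θ) hθK) hθK
  have hfderiv (x : E) : fderiv ℝ (ψ - φ) x = fderiv ℝ ψ x - fderiv ℝ φ x :=
    fderiv_sub (hψ.differentiable one_ne_zero x) (hφ.differentiable one_ne_zero x)
  refine (congrArg abs ?_).trans_le (abs_integral_mul_sub_fderiv_apply_le (φ := ψ - φ) hh hG
    ((tsupport_sub ψ φ).trans (union_subset hψK hφK)) hψφ
    fun x => (congrArg norm (hfderiv x)).trans_le (hψφ' x))
  refine (integral_sub (hint hψ hψK) (hint hφ hφK)).symm.trans (integral_congr_ae (.of_forall ?_))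
  intro x
  simp only [hfderiv, Pi.sub_apply, _root_.sub_apply]
  ring

theorem WeakDivAddNonneg.integral_nonneg_of_contDiff_one (hU : IsOpen U)
    (hw : WeakDivAddNonneg μ G h U) (hG : LocallyIntegrableOn G U μ)
    (hh : LocallyIntegrableOn h U μ) (hφ : ContDiff ℝ 1 φ) (hc : HasCompactSupport φ)
    (hs : tsupport φ ⊆ U) (h₀ : ∀ x, 0 ≤ φ x) :
    0 ≤ ∫ x, (h x * φ x - fderiv ℝ φ x (G x)) ∂μ := by
  obtain ⟨δ, hδ, hδU⟩ := hc.isCompact.exists_cthickening_subset_open hU hs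
  set K := cthickening δ (tsupport φ)
  have hK : IsCompact K := hc.isCompact.cthickening
  have hbound : ∀ ε > 0, -(ε * ∫ x in K, (|h x| + ‖G x‖) ∂μ) ≤
      ∫ x, (h x * φ x - fderiv ℝ φ x (G x)) ∂μ := by
    intro ε hε
    obtain ⟨ψ, hψ, hψK, hψ₀, hψφ, hψφ'⟩ := exists_contDiff_nonneg_approx hφ hc h₀ hδ hε
    have hψ₁ : ContDiff ℝ 1 ψ := hψ.of_le (by exact_mod_cast le_top)
    have hψc : HasCompactSupport ψ := hK.of_isClosed_subset (isClosed_tsupport ψ) hψK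
    have hψpos : 0 ≤ ∫ x, (h x * ψ x - fderiv ℝ ψ x (G x)) ∂μ := by
      rw [integral_sub (integrable_mul_of_tsupport_subset hh hψ.continuous hψc (hψK.trans hδU))
        (integrable_fderiv_apply_of_tsupport_subset hG hψ₁ hψc (hψK.trans hδU)), sub_nonneg]
      exact hw ψ hψ hψc (hψK.trans hδU) hψ₀
    have herror := abs_integral_mul_sub_fderiv_apply_sub_le
      (hh.integrableOn_compact_subset hδU hK) (hG.integrableOn_compact_subset hδU hK) hK
      hψ₁ hφ hψK (self_subset_cthickening _) hψφ hψφ'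
    linarith [(abs_le.1 herror).2]
  have hlim : Tendsto (fun ε : ℝ => -(ε * ∫ x in K, (|h x| + ‖G x‖) ∂μ)) (nhdsWithin 0 (Ioi 0))
      (nhds 0) := by
    refine tendsto_nhdsWithin_of_tendsto_nhds (Continuous.tendsto' ?_ _ _ (by simp))
    fun_prop
  exact le_of_tendsto hlim (eventually_mem_nhdsWithin.mono hbound)

end WeakInequality

section ScalarInequalities

variable {p α s t w v η δ κ C₁ C₂ L b g₁ g₂ : ℝ}

lemma rpow_mul_rpow_sub_le {ε : ℝ} (hα : 0 ≤ α) (hαp : α ≤ p) (hε : 0 < ε) (ht : 0 ≤ t)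
    (hw : 0 ≤ w) : t ^ α * w ^ (p - α) ≤ ε ^ (p - α) * t ^ p + ε ^ (-α) * w ^ p := by
  have hpow {x : ℝ} (hx : 0 ≤ x) : x ^ α * x ^ (p - α) = x ^ p := by
    rw [← Real.rpow_add_of_nonneg hx hα (sub_nonneg.2 hαp), add_sub_cancel]
  rcases le_total w (ε * t) with hwt | htw
  · calc t ^ α * w ^ (p - α) ≤ t ^ α * (ε * t) ^ (p - α) := by gcongr
      _ = ε ^ (p - α) * t ^ p := by
          rw [Real.mul_rpow hε.le ht, mul_left_comm, hpow ht]
      _ ≤ _ := le_add_of_nonneg_right (by positivity)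
  · calc t ^ α * w ^ (p - α) ≤ (ε⁻¹ * w) ^ α * w ^ (p - α) := by
          gcongr
          rwa [inv_mul_eq_div, le_div_iff₀' hε]
      _ = ε ^ (-α) * w ^ p := by
          rw [Real.mul_rpow (inv_nonneg.2 hε.le) hw, Real.inv_rpow hε.le, Real.rpow_neg hε.le,
            mul_assoc, hpow hw]
      _ ≤ _ := le_add_of_nonneg_left (by positivity)

lemma drift_mul_le (hp : 1 ≤ p) (hα : p - 1 ≤ α) (hαp : α ≤ p) (hs : 1 ≤ s) (ht : 0 ≤ t)
    (hv : 0 ≤ v) (hδ : 0 < δ) (hκ : 0 ≤ κ) (hb : δ ^ (p - α) * v ^ (α - p + 1) * b ≤ κ) :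
    b * t ^ α * v ≤ κ * (s * t ^ p + s ^ (1 - p) * (v / δ) ^ p) := by
  have hvα : v ^ (α - p + 1) * v ^ (p - α) = v := by
    rw [← Real.rpow_add_of_nonneg hv (by linarith) (by linarith)]
    ring_nf
    exact Real.rpow_one v
  have hscale : δ ^ (p - α) * (v / δ) ^ (p - α) = v ^ (p - α) := by
    rw [← Real.mul_rpow hδ.le (by positivity), mul_div_cancel₀ v hδ.ne']
  calc b * t ^ α * v
      = b * t ^ α * (v ^ (α - p + 1) * (δ ^ (p - α) * (v / δ) ^ (p - α))) := by rw [hscale, hvα]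
    _ = (δ ^ (p - α) * v ^ (α - p + 1) * b) * (t ^ α * (v / δ) ^ (p - α)) := by ring
    _ ≤ κ * (t ^ α * (v / δ) ^ (p - α)) := by gcongr
    _ ≤ κ * (s ^ (p - α) * t ^ p + s ^ (-α) * (v / δ) ^ p) := by
        gcongr
        exact rpow_mul_rpow_sub_le (by linarith) hαp (by positivity) ht (by positivity)
    _ ≤ κ * (s * t ^ p + s ^ (1 - p) * (v / δ) ^ p) := by
        gcongr
        · exact Real.rpow_le_self_of_one_le hs (by linarith)
        · linarith

lemma neg_flux_mul_le (hp : 1 ≤ p) (hs : 0 < s) (ht : 0 ≤ t) (hv : 0 ≤ v) (hη : 0 ≤ η)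
    (hδ : 0 ≤ δ) (hκ : 0 < κ) (hC₂ : 0 ≤ C₂) (hL : 0 ≤ L)
    (hg₁ : |g₁| ≤ L / δ * (C₂ * t ^ (p - 1))) :
    -(p * η ^ (p - 1) * v * g₁) ≤
      κ * s * (η * t) ^ p + s ^ (1 - p) * (κ ^ (1 - p) * (p * C₂ * L) ^ p * (v / δ) ^ p) := by
  have hv' : 0 ≤ v / δ := by positivity
  calc -(p * η ^ (p - 1) * v * g₁)
      = p * η ^ (p - 1) * v * -g₁ := by ring
    _ ≤ p * η ^ (p - 1) * v * (L / δ * (C₂ * t ^ (p - 1))) := by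
        gcongr
        exact (neg_le_abs g₁).trans hg₁
    _ = (η * t) ^ (p - 1) * (p * C₂ * L * (v / δ)) ^ (p - (p - 1)) := by
        rw [Real.mul_rpow hη ht, sub_sub_cancel, Real.rpow_one]; ring
    _ ≤ (κ * s) ^ (p - (p - 1)) * (η * t) ^ p +
          (κ * s) ^ (-(p - 1)) * (p * C₂ * L * (v / δ)) ^ p :=
        rpow_mul_rpow_sub_le (by linarith) (by linarith) (by positivity) (by positivity)
          (by positivity)
    _ = _ := by
        rw [sub_sub_cancel, Real.rpow_one, neg_sub, Real.mul_rpow hκ.le hs.le,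
          Real.mul_rpow (by positivity) hv']
        ring

/-- The constant of the Caccioppoli inequality, for a cutoff function whose gradient is bounded by
`L` over the distance of the two spheres. -/
def caccioppoliConst (p C₁ C₂ L : ℝ) : ℝ :=
  4 / C₁ * ((C₁ / 4) ^ (1 - p) * (p * C₂ * L) ^ p + C₁ / 2)

lemma caccioppoliConst_pos (hp : 0 ≤ p) (hC₁ : 0 < C₁) (hC₂ : 0 ≤ C₂) (hL : 0 ≤ L) :
    0 < caccioppoliConst p C₁ C₂ L := by
  unfold caccioppoliConst
  positivity

/-- `t` and `v` are the values of `‖Dv‖` and `v` at a point, `g₁` and `g₂` those of `A · Dη` and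
`A · Dv`: the left side is `b ‖Dv‖^α φ - A · Dφ` at that point, for `φ = η ^ p * v ^ s`. -/
lemma drift_sub_flux_le (hp : 1 ≤ p) (hα : p - 1 ≤ α) (hαp : α ≤ p) (hs : 1 ≤ s) (ht : 0 ≤ t)
    (hv : 0 ≤ v) (hη : 0 ≤ η) (hη₁ : η ≤ 1) (hδ : 0 < δ) (hC₁ : 0 < C₁) (hC₂ : 0 ≤ C₂)
    (hL : 0 ≤ L) (hb : δ ^ (p - α) * v ^ (α - p + 1) * b ≤ C₁ / 2)
    (hg₁ : |g₁| ≤ L / δ * (C₂ * t ^ (p - 1))) (hg₂ : C₁ * t ^ p ≤ g₂) :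
    b * t ^ α * (η ^ p * v ^ s) - (s * η ^ p * v ^ (s - 1) * g₂ + p * η ^ (p - 1) * v ^ s * g₁) ≤
      C₁ / 4 * (s ^ (1 - p) * (caccioppoliConst p C₁ C₂ L * (v ^ (s - 1) * (v / δ) ^ p)) -
        s * (η ^ p * (v ^ (s - 1) * t ^ p))) := by
  have hvs : v ^ s = v ^ (s - 1) * v := by
    rw [← Real.rpow_add_one' hv (by linarith), sub_add_cancel]
  have hs₀ : 0 < s := by linarith
  have hflux := neg_flux_mul_le hp hs₀ ht hv hη hδ.le (by positivity : 0 < C₁ / 4) hC₂ hL hg₁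
  have hdrift : η ^ p * (b * t ^ α * v) ≤
      C₁ / 2 * (s * (η ^ p * t ^ p) + s ^ (1 - p) * (v / δ) ^ p) :=
    calc η ^ p * (b * t ^ α * v)
        ≤ η ^ p * (C₁ / 2 * (s * t ^ p + s ^ (1 - p) * (v / δ) ^ p)) := by
          refine mul_le_mul_of_nonneg_left ?_ (by positivity)
          exact drift_mul_le hp hα hαp hs ht hv hδ (by positivity) hb
      _ = C₁ / 2 * (s * (η ^ p * t ^ p) + η ^ p * (s ^ (1 - p) * (v / δ) ^ p)) := by ring
      _ ≤ C₁ / 2 * (s * (η ^ p * t ^ p) + 1 * (s ^ (1 - p) * (v / δ) ^ p)) := by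
          gcongr
          exact Real.rpow_le_one hη hη₁ (by linarith)
      _ = _ := by rw [one_mul]
  have hcoercive : s * η ^ p * (C₁ * t ^ p) ≤ s * η ^ p * g₂ := by gcongr
  rw [Real.mul_rpow hη ht] at hflux
  calc b * t ^ α * (η ^ p * v ^ s) -
        (s * η ^ p * v ^ (s - 1) * g₂ + p * η ^ (p - 1) * v ^ s * g₁)
      = v ^ (s - 1) *
          (η ^ p * (b * t ^ α * v) - s * η ^ p * g₂ + -(p * η ^ (p - 1) * v * g₁)) := by
        rw [hvs]; ring
    _ ≤ v ^ (s - 1) * (C₁ / 4 * (s ^ (1 - p) * (caccioppoliConst p C₁ C₂ L * (v / δ) ^ p) -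
          s * (η ^ p * t ^ p))) := by
        gcongr
        unfold caccioppoliConst
        field_simp at hflux ⊢
        linarith
    _ = _ := by ring

end ScalarInequalities

section Cutoff

lemma exists_lipschitzWith_smoothTransition :
    ∃ K : NNReal, LipschitzWith K Real.smoothTransition := by
  obtain ⟨K, hK⟩ := (Real.smoothTransition.contDiff (n := 1)).contDiffOn.exists_lipschitzOnWith
    one_ne_zero (convex_Icc (0 : ℝ) 1) isCompact_Icc
  have hcomp := (lipschitzOnWith_iff_restrict.1 hK).comp (LipschitzWith.projIcc zero_le_one)
  rw [mul_one] at hcomp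
  exact ⟨K, fun x y => by simpa using hcomp x y⟩

variable {E : Type*} [NormedAddCommGroup E] {z : E}

section RadialTransition

/-- The function `1` on `ball z a`, `0` off `ball z b`, and radial in between. -/
def radialTransition (z : E) (a b : ℝ) (x : E) : ℝ :=
  Real.smoothTransition ((b - ‖x - z‖) / (b - a))

variable {a b : ℝ} {x : E}

lemma radialTransition_eq_one (hab : a < b) (hx : x ∈ ball z a) : radialTransition z a b x = 1 := by
  refine Real.smoothTransition.one_of_one_le ((one_le_div (sub_pos.2 hab)).2 ?_)
  linarith [mem_ball_iff_norm.1 hx]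

lemma tsupport_radialTransition_subset (hab : a < b) :
    tsupport (radialTransition z a b) ⊆ closedBall z b := by
  refine closure_minimal (fun x hx => ?_) isClosed_closedBall
  contrapose! hx
  rw [mem_closedBall_iff_norm, not_le] at hx
  exact Function.notMem_support.2 (Real.smoothTransition.zero_of_nonpos
    (div_nonpos_of_nonpos_of_nonneg (by linarith) (by linarith)))

lemma lipschitzWith_radialTransition {K : NNReal} (hK : LipschitzWith K Real.smoothTransition)
    (hab : a < b) : LipschitzWith (K / (b - a).toNNReal) (radialTransition z a b) := by
  refine LipschitzWith.of_dist_le_mul fun x y => ?_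
  have hba : 0 < b - a := sub_pos.2 hab
  calc dist (radialTransition z a b x) (radialTransition z a b y)
      ≤ K * dist ((b - ‖x - z‖) / (b - a)) ((b - ‖y - z‖) / (b - a)) := hK.dist_le_mul _ _
    _ = K / (b - a) * |‖y - z‖ - ‖x - z‖| := by
        rw [Real.dist_eq, ← sub_div, abs_div, abs_of_pos hba, sub_sub_sub_cancel_left]
        ring
    _ ≤ K / (b - a) * ‖(y - z) - (x - z)‖ := by gcongr; exact abs_norm_sub_norm_le _ _
    _ = _ := by
        rw [sub_sub_sub_cancel_right, ← dist_eq_norm, dist_comm, NNReal.coe_div,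
          Real.coe_toNNReal _ hba.le]

lemma contDiff_radialTransition [InnerProductSpace ℝ E] (ha : 0 < a) (hab : a < b) :
    ContDiff ℝ 1 (radialTransition z a b) := by
  refine contDiff_iff_contDiffAt.2 fun x => ?_
  rcases eq_or_ne x z with rfl | hxz
  · refine (contDiffAt_const (c := (1 : ℝ))).congr_of_eventuallyEq ?_
    filter_upwards [ball_mem_nhds x ha] with y hy using radialTransition_eq_one hab hy
  · have hnorm : ContDiffAt ℝ 1 (fun y => ‖y - z‖) x :=
      (contDiffAt_id.sub contDiffAt_const).norm ℝ (sub_ne_zero.2 hxz)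
    exact Real.smoothTransition.contDiffAt.comp x ((contDiffAt_const.sub hnorm).div_const _)

end RadialTransition

variable [NormedSpace ℝ E] {r₁ r₂ L : ℝ}

/-- `η` is a `C¹` cutoff function between `ball z r₁` and `ball z r₂` whose gradient is bounded by
`L` over the distance of the two spheres. -/
structure IsCutoff (η : E → ℝ) (z : E) (r₁ r₂ L : ℝ) : Prop where
  contDiff : ContDiff ℝ 1 η
  nonneg : ∀ x, 0 ≤ η x
  le_one : ∀ x, η x ≤ 1
  eq_one : ∀ x ∈ ball z r₁, η x = 1
  tsupport_subset : tsupport η ⊆ ball z r₂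
  norm_fderiv_le : ∀ x, ‖fderiv ℝ η x‖ ≤ L / (r₂ - r₁)

lemma IsCutoff.hasCompactSupport [ProperSpace E] {η : E → ℝ} (hη : IsCutoff η z r₁ r₂ L) :
    HasCompactSupport η :=
  (isCompact_closedBall z r₂).of_isClosed_subset (isClosed_tsupport η)
    (hη.tsupport_subset.trans ball_subset_closedBall)

theorem exists_isCutoff (E : Type*) [NormedAddCommGroup E] [InnerProductSpace ℝ E] :
    ∃ L ≥ 0, ∀ (z : E) (r₁ r₂ : ℝ), 0 < r₁ → r₁ < r₂ → ∃ η, IsCutoff η z r₁ r₂ L := by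
  obtain ⟨K, hK⟩ := exists_lipschitzWith_smoothTransition
  refine ⟨2 * K, by positivity, fun z r₁ r₂ hr₁ hr => ?_⟩
  have hρ : r₁ < (r₁ + r₂) / 2 := left_lt_add_div_two.2 hr
  refine ⟨radialTransition z r₁ ((r₁ + r₂) / 2), contDiff_radialTransition hr₁ hρ,
    fun x => Real.smoothTransition.nonneg _, fun x => Real.smoothTransition.le_one _,
    fun x => radialTransition_eq_one hρ, (tsupport_radialTransition_subset hρ).trans
      (closedBall_subset_ball (add_div_two_lt_right.2 hr)), fun x => ?_⟩
  refine (norm_fderiv_le_of_lipschitz ℝ (lipschitzWith_radialTransition hK hρ)).trans_eq ?_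
  rw [NNReal.coe_div, Real.coe_toNNReal _ (by linarith)]
  field_simp
  ring

end Cutoff

section Caccioppoli

lemma tsupport_rpow_mul_subset {X : Type*} [TopologicalSpace X] {p : ℝ} (hp : p ≠ 0)
    (η f : X → ℝ) : tsupport (fun y => η y ^ p * f y) ⊆ tsupport η :=
  closure_mono fun y hy hηy => hy (by simp [hηy, Real.zero_rpow hp])

variable {E : Type*} [NormedAddCommGroup E] [NormedSpace ℝ E]

section TestFunction

variable {η v : E → ℝ} {z : E} {r₁ r₂ L p s : ℝ} {x : E}

lemma fderiv_rpow_mul_rpow_apply (hη : DifferentiableAt ℝ η x) (hv : DifferentiableAt ℝ v x)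
    (hp : 1 ≤ p) (hs : 1 ≤ s) (w : E) :
    fderiv ℝ (fun y => η y ^ p * v y ^ s) x w =
      s * η x ^ p * v x ^ (s - 1) * fderiv ℝ v x w +
        p * η x ^ (p - 1) * v x ^ s * fderiv ℝ η x w := by
  have hφ : HasFDerivAt (fun y => η y ^ p * v y ^ s) _ x :=
    (hη.hasFDerivAt.rpow_const (.inr hp)).mul (hv.hasFDerivAt.rpow_const (.inr hs))
  rw [hφ.fderiv]
  simp only [_root_.add_apply, _root_.smul_apply, smul_eq_mul]
  ring

lemma norm_fderiv_rpow_const_rpow {γ : ℝ} (hv : DifferentiableAt ℝ v x) (hx : 0 ≤ v x)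
    (hγ : 1 ≤ γ) (p : ℝ) :
    ‖fderiv ℝ (fun y => v y ^ γ) x‖ ^ p =
      γ ^ p * (v x ^ (p * (γ - 1)) * ‖fderiv ℝ v x‖ ^ p) := by
  have hγ₀ : 0 ≤ γ := by linarith
  have hcoeff : 0 ≤ γ * v x ^ (γ - 1) := by positivity
  rw [(hv.hasFDerivAt.rpow_const (.inr hγ)).fderiv, norm_smul, Real.norm_of_nonneg hcoeff,
    Real.mul_rpow hcoeff (norm_nonneg _), Real.mul_rpow hγ₀ (by positivity), ← Real.rpow_mul hx,
    mul_comm (γ - 1), mul_assoc]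

lemma IsCutoff.tsupport_rpow_mul_subset_ball (hη : IsCutoff η z r₁ r₂ L) (hp : p ≠ 0) (f : E → ℝ) :
    tsupport (fun y => η y ^ p * f y) ⊆ ball z r₂ :=
  (tsupport_rpow_mul_subset hp η f).trans hη.tsupport_subset

lemma IsCutoff.hasCompactSupport_rpow_mul [ProperSpace E] (hη : IsCutoff η z r₁ r₂ L) (hp : p ≠ 0)
    (f : E → ℝ) : HasCompactSupport fun y => η y ^ p * f y :=
  hη.hasCompactSupport.of_isClosed_subset (isClosed_tsupport _) (tsupport_rpow_mul_subset hp η f)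

lemma IsCutoff.contDiff_rpow_mul_rpow (hη : IsCutoff η z r₁ r₂ L)
    (hv : ContDiffOn ℝ 1 v (ball z r₂)) (hp : 1 ≤ p) (hs : 1 ≤ s) :
    ContDiff ℝ 1 fun y => η y ^ p * v y ^ s := by
  refine contDiff_iff_contDiffAt.2 fun x => ?_
  by_cases hx : x ∈ ball z r₂
  · exact (hη.contDiff.contDiffAt.rpow_const_of_le (by simpa using hp)).mul
      ((hv.contDiffAt (isOpen_ball.mem_nhds hx)).rpow_const_of_le (by simpa using hs))
  · refine (contDiffAt_const (c := (0 : ℝ))).congr_of_eventuallyEq ?_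
    exact notMem_tsupport_iff_eventuallyEq.1 fun hx' =>
      hx (hη.tsupport_rpow_mul_subset_ball (by positivity) _ hx')

end TestFunction

variable [MeasurableSpace E] {μ : Measure E} {U V : Set E} {p α C₁ C₂ : ℝ}
  {G : E → E} {b v : E → ℝ}

/-- `v` is a nonnegative `C¹` weak solution of `div G + b ‖Dv‖ ^ α ≥ 0` in `U`, where `G` has the
size and the coercivity of the `p`-Laplacian field `‖∇v‖ ^ (p - 2) • ∇v`. In the quasilinear
inequality, `G x` is `A(x, Dv(x))`. -/
structure IsWeakSubsolution (μ : Measure E) (p α C₁ C₂ : ℝ) (G : E → E) (b v : E → ℝ)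
    (U : Set E) : Prop where
  contDiffOn : ContDiffOn ℝ 1 v U
  nonneg : ∀ x ∈ U, 0 ≤ v x
  aestronglyMeasurable : AEStronglyMeasurable G (μ.restrict U)
  locallyIntegrableOn : LocallyIntegrableOn b U μ
  coercive : ∀ᵐ x ∂μ.restrict U, C₁ * ‖fderiv ℝ v x‖ ^ p ≤ fderiv ℝ v x (G x)
  growth : ∀ᵐ x ∂μ.restrict U, ‖G x‖ ≤ C₂ * ‖fderiv ℝ v x‖ ^ (p - 1)
  weak : WeakDivAddNonneg μ G (fun x => b x * ‖fderiv ℝ v x‖ ^ α) U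

namespace IsWeakSubsolution

lemma mono (hv : IsWeakSubsolution μ p α C₁ C₂ G b v U) (hVU : V ⊆ U) :
    IsWeakSubsolution μ p α C₁ C₂ G b v V where
  contDiffOn := hv.contDiffOn.mono hVU
  nonneg x hx := hv.nonneg x (hVU hx)
  aestronglyMeasurable := hv.aestronglyMeasurable.mono_set hVU
  locallyIntegrableOn := hv.locallyIntegrableOn.mono_set hVU
  coercive := ae_restrict_of_ae_restrict_of_subset hVU hv.coercive
  growth := ae_restrict_of_ae_restrict_of_subset hVU hv.growth
  weak := hv.weak.mono hVU

lemma continuousOn_norm_fderiv_rpow (hv : IsWeakSubsolution μ p α C₁ C₂ G b v U) (hU : IsOpen U)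
    {q : ℝ} (hq : 0 ≤ q) : ContinuousOn (fun x => ‖fderiv ℝ v x‖ ^ q) U :=
  ((hv.contDiffOn.continuousOn_fderiv_of_isOpen hU le_rfl).norm).rpow_const fun _ _ => .inr hq

variable {η : E → ℝ} {z : E} {r₁ r₂ L s : ℝ}

variable [BorelSpace E]

lemma ae_drift_sub_flux_le (hv : IsWeakSubsolution μ p α C₁ C₂ G b v (ball z r₂))
    (hη : IsCutoff η z r₁ r₂ L) (hr : r₁ < r₂) (hp : 1 ≤ p) (hα : p - 1 ≤ α) (hαp : α ≤ p)
    (hC₁ : 0 < C₁) (hC₂ : 0 ≤ C₂) (hL : 0 ≤ L) (hs : 1 ≤ s)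
    (hsmall : ∀ᵐ x ∂μ.restrict (ball z r₂),
      (r₂ - r₁) ^ (p - α) * v x ^ (α - p + 1) * b x ≤ C₁ / 2) :
    ∀ᵐ x ∂μ.restrict (ball z r₂), b x * ‖fderiv ℝ v x‖ ^ α * (η x ^ p * v x ^ s) -
        fderiv ℝ (fun y => η y ^ p * v y ^ s) x (G x) ≤
      C₁ / 4 * (s ^ (1 - p) * (caccioppoliConst p C₁ C₂ L / (r₂ - r₁) ^ p * v x ^ (s - 1 + p)) -
        s * (η x ^ p * (v x ^ (s - 1) * ‖fderiv ℝ v x‖ ^ p))) := by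
  filter_upwards [hv.coercive, hv.growth, hsmall, ae_restrict_mem measurableSet_ball]
    with x hcoercive hgrowth hsmall hx
  have hvx := hv.nonneg x hx
  have hδ : 0 < r₂ - r₁ := sub_pos.2 hr
  have hflux : |fderiv ℝ η x (G x)| ≤ L / (r₂ - r₁) * (C₂ * ‖fderiv ℝ v x‖ ^ (p - 1)) :=
    ((fderiv ℝ η x).le_opNorm (G x)).trans (by gcongr; exact hη.norm_fderiv_le x)
  rw [fderiv_rpow_mul_rpow_apply (hη.contDiff.differentiable one_ne_zero x)
    ((hv.contDiffOn.contDiffAt (isOpen_ball.mem_nhds hx)).differentiableAt one_ne_zero) hp hs]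
  refine (drift_sub_flux_le hp hα hαp hs (norm_nonneg _) hvx (hη.nonneg x) (hη.le_one x) hδ hC₁ hC₂
    hL hsmall hflux hcoercive).trans_eq ?_
  rw [Real.div_rpow hvx hδ.le, Real.rpow_add_of_nonneg hvx (by linarith) (by linarith)]
  ring

variable [FiniteDimensional ℝ E]

lemma locallyIntegrableOn_drift (hv : IsWeakSubsolution μ p α C₁ C₂ G b v U) (hU : IsOpen U)
    (hα : 0 ≤ α) : LocallyIntegrableOn (fun x => b x * ‖fderiv ℝ v x‖ ^ α) U μ :=
  hv.locallyIntegrableOn.mul_continuousOn (hv.continuousOn_norm_fderiv_rpow hU hα)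
    hU.isLocallyClosed

variable [IsLocallyFiniteMeasure μ]

lemma locallyIntegrableOn_field (hv : IsWeakSubsolution μ p α C₁ C₂ G b v U) (hU : IsOpen U)
    (hp : 1 ≤ p) : LocallyIntegrableOn G U μ := by
  have hbound : LocallyIntegrableOn (fun x => C₂ * ‖fderiv ℝ v x‖ ^ (p - 1)) U μ :=
    (continuousOn_const.mul (hv.continuousOn_norm_fderiv_rpow hU (sub_nonneg.2 hp))
      ).locallyIntegrableOn hU.measurableSet
  exact (locallyIntegrableOn_iff hU.isLocallyClosed).2 fun K hKU hK =>
    (hbound.integrableOn_compact_subset hKU hK).mono' (hv.aestronglyMeasurable.mono_set hKU)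
      (ae_restrict_of_ae_restrict_of_subset hKU hv.growth)

lemma integrable_drift_sub_flux (hv : IsWeakSubsolution μ p α C₁ C₂ G b v (ball z r₂))
    (hη : IsCutoff η z r₁ r₂ L) (hp : 1 ≤ p) (hα : 0 ≤ α) (hs : 1 ≤ s) :
    Integrable (fun x => b x * ‖fderiv ℝ v x‖ ^ α * (η x ^ p * v x ^ s) -
      fderiv ℝ (fun y => η y ^ p * v y ^ s) x (G x)) μ := by
  have hp₀ : p ≠ 0 := by positivity
  exact integrable_mul_sub_fderiv_apply (hv.locallyIntegrableOn_drift isOpen_ball hα)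
    (hv.locallyIntegrableOn_field isOpen_ball hp) (hη.contDiff_rpow_mul_rpow hv.contDiffOn hp hs)
    (hη.hasCompactSupport_rpow_mul hp₀ _) (hη.tsupport_rpow_mul_subset_ball hp₀ _)

lemma setIntegral_drift_sub_flux_nonneg
    (hv : IsWeakSubsolution μ p α C₁ C₂ G b v (ball z r₂)) (hη : IsCutoff η z r₁ r₂ L)
    (hp : 1 ≤ p) (hα : 0 ≤ α) (hs : 1 ≤ s) :
    0 ≤ ∫ x in ball z r₂, (b x * ‖fderiv ℝ v x‖ ^ α * (η x ^ p * v x ^ s) -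
      fderiv ℝ (fun y => η y ^ p * v y ^ s) x (G x)) ∂μ := by
  have hp₀ : p ≠ 0 := by positivity
  have hφV := hη.tsupport_rpow_mul_subset_ball hp₀ fun y => v y ^ s
  rw [setIntegral_eq_integral_of_forall_compl_eq_zero fun x hx => ?_]
  · refine hv.weak.integral_nonneg_of_contDiff_one isOpen_ball
      (hv.locallyIntegrableOn_field isOpen_ball hp) (hv.locallyIntegrableOn_drift isOpen_ball hα)
      (hη.contDiff_rpow_mul_rpow hv.contDiffOn hp hs)
      (hη.hasCompactSupport_rpow_mul hp₀ _) hφV fun x => ?_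
    by_cases hx : x ∈ ball z r₂
    · exact mul_nonneg (Real.rpow_nonneg (hη.nonneg x) p) (Real.rpow_nonneg (hv.nonneg x hx) s)
    · exact (image_eq_zero_of_notMem_tsupport fun hx' => hx (hφV hx')).ge
  · have hx' := fun hx' => hx (hφV hx')
    rw [image_eq_zero_of_notMem_tsupport hx', fderiv_of_notMem_tsupport ℝ hx', mul_zero,
      _root_.zero_apply, sub_zero]

lemma integrableOn_energy (hv : IsWeakSubsolution μ p α C₁ C₂ G b v (ball z r₂))
    (hη : IsCutoff η z r₁ r₂ L) (hp : 0 < p) (hs : 1 ≤ s) :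
    IntegrableOn (fun x => η x ^ p * (v x ^ (s - 1) * ‖fderiv ℝ v x‖ ^ p)) (ball z r₂) μ := by
  have hcont : ContinuousOn (fun x => v x ^ (s - 1) * ‖fderiv ℝ v x‖ ^ p) (ball z r₂) :=
    (hv.contDiffOn.continuousOn.rpow_const fun _ _ => .inr (sub_nonneg.2 hs)).mul
      (hv.continuousOn_norm_fderiv_rpow isOpen_ball hp.le)
  simp_rw [mul_comm (η _ ^ p)]
  exact (integrable_mul_of_tsupport_subset (hcont.locallyIntegrableOn measurableSet_ball)
    (hη.contDiff.continuous.rpow_const fun _ => .inr hp.le)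
    (by simpa using hη.hasCompactSupport_rpow_mul hp.ne' 1)
    (by simpa using hη.tsupport_rpow_mul_subset_ball hp.ne' 1)).integrableOn

lemma integrableOn_rpow (hv : IsWeakSubsolution μ p α C₁ C₂ G b v (ball z r₂))
    (hbdd : BddAbove (v '' ball z r₂)) {q : ℝ} (hq : 0 ≤ q) :
    IntegrableOn (fun x => v x ^ q) (ball z r₂) μ := by
  obtain ⟨M, hM⟩ := hbdd
  refine IntegrableOn.of_bound (C := M ^ q) measure_ball_lt_top
    ((hv.contDiffOn.continuousOn.rpow_const fun _ _ => .inr hq).aestronglyMeasurable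
      measurableSet_ball) ?_
  filter_upwards [ae_restrict_mem measurableSet_ball] with x hx
  rw [Real.norm_of_nonneg (Real.rpow_nonneg (hv.nonneg x hx) q)]
  exact Real.rpow_le_rpow (hv.nonneg x hx) (hM (mem_image_of_mem v hx)) hq

theorem setIntegral_energy_le (hv : IsWeakSubsolution μ p α C₁ C₂ G b v (ball z r₂))
    (hη : IsCutoff η z r₁ r₂ L) (hr : r₁ < r₂) (hp : 1 ≤ p) (hα : p - 1 ≤ α) (hαp : α ≤ p)
    (hC₁ : 0 < C₁) (hC₂ : 0 ≤ C₂) (hL : 0 ≤ L) (hs : 1 ≤ s) (hbdd : BddAbove (v '' ball z r₂))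
    (hsmall : ∀ᵐ x ∂μ.restrict (ball z r₂),
      (r₂ - r₁) ^ (p - α) * v x ^ (α - p + 1) * b x ≤ C₁ / 2) :
    s ^ p * ∫ x in ball z r₂, η x ^ p * (v x ^ (s - 1) * ‖fderiv ℝ v x‖ ^ p) ∂μ ≤
      caccioppoliConst p C₁ C₂ L / (r₂ - r₁) ^ p * ∫ x in ball z r₂, v x ^ (s - 1 + p) ∂μ := by
  have hs₀ : 0 < s := by linarith
  have hα₀ : 0 ≤ α := by linarith
  have henergy := hv.integrableOn_energy hη (by linarith : 0 < p) hs
  have hpow := hv.integrableOn_rpow hbdd (by linarith : 0 ≤ s - 1 + p)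
  have hbalance := (hv.setIntegral_drift_sub_flux_nonneg hη hp hα₀ hs).trans
    (integral_mono_ae (hv.integrable_drift_sub_flux hη hp hα₀ hs).integrableOn
      ((((hpow.const_mul _).const_mul _).sub (henergy.const_mul _)).const_mul _)
      (hv.ae_drift_sub_flux_le hη hr hp hα hαp hC₁ hC₂ hL hs hsmall))
  rw [integral_const_mul, integral_sub' ((hpow.const_mul _).const_mul _) (henergy.const_mul _),
    integral_const_mul, integral_const_mul, integral_const_mul] at hbalance
  have hmain := sub_nonneg.1 (nonneg_of_mul_nonneg_right hbalance (by positivity))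
  have hsplit : s ^ p = s / s ^ (1 - p) := by
    rw [Real.rpow_sub hs₀, Real.rpow_one]; field_simp
  rwa [hsplit, div_mul_eq_mul_div, div_le_iff₀' (by positivity)]

theorem setIntegral_norm_fderiv_rpow_le (hv : IsWeakSubsolution μ p α C₁ C₂ G b v (ball z r₂))
    (hη : IsCutoff η z r₁ r₂ L) (hr : r₁ < r₂) (hp : 1 ≤ p) (hα : p - 1 ≤ α) (hαp : α ≤ p)
    (hC₁ : 0 < C₁) (hC₂ : 0 ≤ C₂) (hL : 0 ≤ L) (hbdd : BddAbove (v '' ball z r₂))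
    (hsmall : ∀ᵐ x ∂μ.restrict (ball z r₂),
      (r₂ - r₁) ^ (p - α) * v x ^ (α - p + 1) * b x ≤ C₁ / 2) {γ : ℝ} (hγ : 1 ≤ γ) :
    ∫ x in ball z r₁, ‖fderiv ℝ (fun y => v y ^ γ) x‖ ^ p ∂μ ≤
      caccioppoliConst p C₁ C₂ L / (r₂ - r₁) ^ p * ∫ x in ball z r₂, v x ^ (γ * p) ∂μ := by
  have hsubset : ball z r₁ ⊆ ball z r₂ := ball_subset_ball hr.le
  have hγs : γ ≤ p * (γ - 1) + 1 := by nlinarith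
  have henergy := hv.setIntegral_energy_le hη hr hp hα hαp hC₁ hC₂ hL (hγ.trans hγs) hbdd hsmall
  have hintegrable := hv.integrableOn_energy hη (by linarith : 0 < p) (hγ.trans hγs)
  rw [add_sub_cancel_right, (by ring : p * (γ - 1) + p = γ * p)] at henergy
  rw [add_sub_cancel_right] at hintegrable
  set energy := fun x => η x ^ p * (v x ^ (p * (γ - 1)) * ‖fderiv ℝ v x‖ ^ p)
  have henergy_nonneg : ∀ x ∈ ball z r₂, 0 ≤ energy x := fun x hx => by
    have := hv.nonneg x hx
    have := hη.nonneg x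
    positivity
  calc ∫ x in ball z r₁, ‖fderiv ℝ (fun y => v y ^ γ) x‖ ^ p ∂μ
      = ∫ x in ball z r₁, γ ^ p * energy x ∂μ := by
        refine setIntegral_congr_fun measurableSet_ball fun x hx => ?_
        have hx₂ := hsubset hx
        simp only [energy, hη.eq_one x hx, Real.one_rpow, one_mul]
        exact norm_fderiv_rpow_const_rpow ((hv.contDiffOn.contDiffAt
          (isOpen_ball.mem_nhds hx₂)).differentiableAt one_ne_zero) (hv.nonneg x hx₂) hγ p
    _ = γ ^ p * ∫ x in ball z r₁, energy x ∂μ := integral_const_mul _ _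
    _ ≤ (p * (γ - 1) + 1) ^ p * ∫ x in ball z r₂, energy x ∂μ := by
        have hnonneg : 0 ≤ᵐ[μ.restrict (ball z r₂)] energy :=
          (ae_restrict_iff' measurableSet_ball).2 (ae_of_all _ henergy_nonneg)
        have hr₁_nonneg := setIntegral_nonneg (μ := μ) measurableSet_ball fun x hx =>
          henergy_nonneg x (hsubset hx)
        exact mul_le_mul (by gcongr) (setIntegral_mono_set hintegrable hnonneg hsubset.eventuallyLE)
          hr₁_nonneg (by positivity)
    _ ≤ _ := henergy

end IsWeakSubsolution

end Caccioppoli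

section EuclideanSpace

lemma norm_gradient_eq_norm_fderiv_s12 {F : Type*} [NormedAddCommGroup F] [InnerProductSpace ℝ F]
    [CompleteSpace F] (f : F → ℝ) (x : F) : ‖gradient f x‖ = ‖fderiv ℝ f x‖ :=
  (InnerProductSpace.toDual ℝ F).symm.norm_map _

lemma measurable_gradient_s12 {F : Type*} [NormedAddCommGroup F] [InnerProductSpace ℝ F]
    [CompleteSpace F] [MeasurableSpace F] [BorelSpace F] (f : F → ℝ) : Measurable (gradient f) :=
  (InnerProductSpace.toDual ℝ F).symm.continuous.measurable.comp (measurable_fderiv ℝ f)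

variable {n : ℕ} {p α C₁ C₂ r : ℝ} {A : Euc n → Euc n → Euc n} {b v : Euc n → ℝ} {z : Euc n}
  {U : Set (Euc n)}

lemma LocBdd.locallyIntegrable (hb : LocBdd b) (hbm : Measurable b) (hb₀ : ∀ x, 0 ≤ b x) :
    LocallyIntegrable b := by
  refine locallyIntegrable_iff.2 fun K hK => ?_
  obtain ⟨C, hC⟩ := hb K hK
  refine .of_bound hK.measure_lt_top hbm.aestronglyMeasurable C ?_
  filter_upwards [ae_restrict_mem hK.measurableSet] with x hx
  exact (Real.norm_of_nonneg (hb₀ x)).trans_le (hC x hx)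

lemma LocBdd.ae_le_essSup_ball (hb : LocBdd b) (z : Euc n) (r : ℝ) :
    ∀ᵐ x ∂volume.restrict (ball z r), b x ≤ essSup b (volume.restrict (ball z r)) := by
  obtain ⟨C, hC⟩ := hb (closedBall z r) (isCompact_closedBall z r)
  refine ae_le_essSup (isBoundedUnder_of_eventually_le (a := C) ?_)
  filter_upwards [ae_restrict_mem measurableSet_ball] with x hx
  exact hC x (ball_subset_closedBall hx)

lemma IsWeakSol.weakDivAddNonneg (hw : IsWeakSol A b α (fun _ => 0) U v) :
    WeakDivAddNonneg volume (fun x => A x (gradient v x)) (fun x => b x * ‖fderiv ℝ v x‖ ^ α)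
      U := by
  intro φ hφ hc hs h₀
  have hzero {x : Euc n} (hx : x ∉ U) : x ∉ tsupport φ := fun hx' => hx (hs hx')
  have hw := hw φ hφ hc hs h₀
  simp only [zero_mul, integral_zero, inner_gradient_right, conj_trivial,
    norm_gradient_eq_norm_fderiv_s12] at hw
  rw [setIntegral_eq_integral_of_forall_compl_eq_zero fun x hx => by
      simp [fderiv_of_notMem_tsupport ℝ (hzero hx)],
    setIntegral_eq_integral_of_forall_compl_eq_zero fun x hx => by
      simp [image_eq_zero_of_notMem_tsupport (hzero hx)]] at hw
  rwa [le_neg_add_iff_add_le, add_zero] at hw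

lemma IsWeakSol.isWeakSubsolution (hw : IsWeakSol A b α (fun _ => 0) U v)
    (hA : StructCond A p C₁ C₂) (hbm : Measurable b) (hb₀ : ∀ x, 0 ≤ b x) (hb : LocBdd b)
    (hv : ContDiffOn ℝ 1 v U) (hv₀ : ∀ x ∈ U, 0 ≤ v x) :
    IsWeakSubsolution volume p α C₁ C₂ (fun x => A x (gradient v x)) b v U where
  contDiffOn := hv
  nonneg := hv₀
  aestronglyMeasurable :=
    (hA.1.comp (measurable_id.prodMk (measurable_gradient_s12 v))).aestronglyMeasurable
  locallyIntegrableOn := (hb.locallyIntegrable hbm hb₀).locallyIntegrableOn U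
  coercive := ae_of_all _ fun x => by
    simpa only [norm_gradient_eq_norm_fderiv_s12, inner_gradient_left] using (hA.2 x (gradient v x)).1
  growth := ae_of_all _ fun x => by
    simpa only [norm_gradient_eq_norm_fderiv_s12] using (hA.2 x (gradient v x)).2
  weak := hw.weakDivAddNonneg

lemma LocBdd.ae_mul_rpow_mul_le_mul_sSup_rpow_mul_essSup {β c : ℝ} (hb : LocBdd b)
    (hb₀ : ∀ x, 0 ≤ b x) (hv₀ : ∀ x ∈ ball z r, 0 ≤ v x) (hbdd : BddAbove (v '' ball z r))
    (hβ : 0 ≤ β) (hc : 0 ≤ c) :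
    ∀ᵐ x ∂volume.restrict (ball z r), c * v x ^ β * b x ≤
      c * sSup (v '' ball z r) ^ β * essSup b (volume.restrict (ball z r)) := by
  filter_upwards [hb.ae_le_essSup_ball z r, ae_restrict_mem measurableSet_ball] with x hbx hx
  have hvx : v x ≤ sSup (v '' ball z r) := le_csSup hbdd (mem_image_of_mem v hx)
  have hv₀x := hv₀ x hx
  have hsup : 0 ≤ sSup (v '' ball z r) := hv₀x.trans hvx
  have hb₀x := hb₀ x
  gcongr

end EuclideanSpace

theorem stmt_12_general {E : Type*} [NormedAddCommGroup E] [InnerProductSpace ℝ E]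
    [FiniteDimensional ℝ E] [MeasurableSpace E] [BorelSpace E] (μ : Measure E)
    [IsLocallyFiniteMeasure μ] {p α C₁ C₂ : ℝ} (hp : 1 ≤ p) (hα : p - 1 ≤ α) (hαp : α ≤ p)
    (hC₁ : 0 < C₁) (hC₂ : 0 ≤ C₂) :
    ∃ C : ℝ, 0 < C ∧ ∀ (G : E → E) (b v : E → ℝ) (z : E) (r : ℝ),
      IsWeakSubsolution μ p α C₁ C₂ G b v (ball z r) → BddAbove (v '' ball z r) →
      (∀ᵐ x ∂μ.restrict (ball z r), r ^ (p - α) * v x ^ (α - p + 1) * b x ≤ C₁ / 2) →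
      ∀ r₁ r₂ γ : ℝ, 0 < r₁ → r₁ < r₂ → r₂ ≤ r → 1 ≤ γ →
        ∫ x in ball z r₁, ‖fderiv ℝ (fun y => v y ^ γ) x‖ ^ p ∂μ ≤
          C / (r₂ - r₁) ^ p * ∫ x in ball z r₂, v x ^ (γ * p) ∂μ := by
  obtain ⟨L, hL, hcutoff⟩ := exists_isCutoff E
  refine ⟨caccioppoliConst p C₁ C₂ L, caccioppoliConst_pos (by linarith) hC₁ hC₂ hL, ?_⟩
  intro G b v z r hv hbdd hsmall r₁ r₂ γ hr₁ hr hr₂ hγ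
  obtain ⟨η, hη⟩ := hcutoff z r₁ r₂ hr₁ hr
  have hsubset : ball z r₂ ⊆ ball z r := ball_subset_ball hr₂
  refine (hv.mono hsubset).setIntegral_norm_fderiv_rpow_le hη hr hp hα hαp hC₁ hC₂ hL
    (hbdd.mono (image_mono hsubset)) ?_ hγ
  filter_upwards [ae_restrict_of_ae_restrict_of_subset hsubset hsmall] with x hx
  rw [mul_assoc] at hx ⊢
  rcases le_total 0 (v x ^ (α - p + 1) * b x) with hb | hb
  · refine le_trans ?_ hx
    gcongr
    linarith
  · exact (mul_nonpos_of_nonneg_of_nonpos (by have := sub_pos.2 hr; positivity) hb).trans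
      (by positivity)

/-- Lemma 4.4 (Caccioppoli-type inequality): for a bounded nonnegative solution of
`div A(x,Dv) + b(x)|Dv|^α ≥ 0` in `B_r(z)` with
`r^{p-α} (sup v)^{α-p+1} (ess sup b) ≤ C₁/2`, one has
`∫_{B_{r₁}(z)} |D(v^γ)|^p ≤ C (r₂-r₁)^{-p} ∫_{B_{r₂}(z)} v^{γp}` for `0 < r₁ < r₂ ≤ r`,
`γ ≥ 1`. -/
theorem stmt_12 (n : ℕ) (hn : 2 ≤ n) (p C₁ C₂ α : ℝ) (hp : 1 < p)
    (hC₁ : 0 < C₁) (hC₂ : 0 < C₂) (hα₁ : p - 1 ≤ α) (hα₂ : α ≤ p) :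
    ∃ C : ℝ, 0 < C ∧
      ∀ (A : Euc n → Euc n → Euc n), StructCond A p C₁ C₂ →
      ∀ (b : Euc n → ℝ), Measurable b → (∀ x, 0 ≤ b x) → LocBdd b →
      ∀ (r : ℝ) (z : Euc n) (v : Euc n → ℝ), 0 < r →
        ContDiffOn ℝ 1 v (Metric.ball z r) →
        (∀ x ∈ Metric.ball z r, 0 ≤ v x) →
        BddAbove (v '' Metric.ball z r) →
        IsWeakSol A b α (fun _ => 0) (Metric.ball z r) v →
        r ^ (p - α) * sSup (v '' Metric.ball z r) ^ (α - p + 1) *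
            essSup b (volume.restrict (Metric.ball z r)) ≤ C₁ / 2 →
        ∀ r₁ r₂ γ : ℝ, 0 < r₁ → r₁ < r₂ → r₂ ≤ r → 1 ≤ γ →
          (∫ x in Metric.ball z r₁, ‖gradient (fun y => v y ^ γ) x‖ ^ p) ≤
            C / (r₂ - r₁) ^ p * ∫ x in Metric.ball z r₂, v x ^ (γ * p) := by
  obtain ⟨C, hC, hcaccioppoli⟩ := stmt_12_general (E := Euc n) volume hp.le hα₁ hα₂ hC₁ hC₂.le
  refine ⟨C, hC, fun A hA b hbm hb₀ hb r z v hr hv hv₀ hbdd hw hsmall r₁ r₂ γ hr₁ hr₁₂ hr₂ hγ => ?_⟩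
  simp only [norm_gradient_eq_norm_fderiv_s12]
  refine hcaccioppoli _ b v z r (hw.isWeakSubsolution hA hbm hb₀ hb hv hv₀) hbdd ?_
    r₁ r₂ γ hr₁ hr₁₂ hr₂ hγ
  exact (hb.ae_mul_rpow_mul_le_mul_sSup_rpow_mul_essSup hb₀ hv₀ hbdd (by linarith)
    (by positivity)).mono fun x hx => hx.trans hsmall
end
end
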